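/- arXiv:1803.00760 — 2 statements merged into one kernel-verified Lean document; each statement's English description precedes it below -/
import Mathlib

section
/- There exist a constant A > 0 and X₀ such that for every real X ≥ X₀: ∏_{p ≤ X, p prime} (1 − (1 − p/X)/p)^{−1} ≥ e^γ (log X) (1 − 1/log X − A/(log X)²). -/
namespace ResonatorProduct

open Complex Filter Topology MeasureTheory Set

/-- The entire function `(s - 1) ζ(s)`. -/
noncomputable def zetaReg : ℂ → ℂ :=
  Function.update (fun s ↦ (s - 1) * riemannZeta s) 1 1

lemma zetaReg_one : zetaReg 1 = 1 := by simp [zetaReg]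

lemma zetaReg_of_ne {s : ℂ} (hs : s ≠ 1) : zetaReg s = (s - 1) * riemannZeta s := by
  simp [zetaReg, hs]

lemma differentiable_zetaReg : Differentiable ℂ zetaReg := by
  rw [← differentiableOn_univ,
    ← differentiableOn_compl_singleton_and_continuousAt_iff (c := 1) Filter.univ_mem]
  refine ⟨DifferentiableOn.congr (f := fun s ↦ (s - 1) * riemannZeta s) (fun s hs ↦ ?_)
    fun s hs ↦ zetaReg_of_ne (by simpa using hs), ?_⟩
  · have : s ≠ 1 := by simpa using hs
    exact ((differentiableAt_id.sub_const 1).mul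
      (differentiableAt_riemannZeta this)).differentiableWithinAt
  · exact continuousAt_update_same.mpr riemannZeta_residue_one

lemma zetaReg_ne_zero {s : ℂ} (hs : 1 ≤ s.re) : zetaReg s ≠ 0 := by
  rcases eq_or_ne s 1 with rfl | h
  · simp [zetaReg_one]
  · rw [zetaReg_of_ne h]
    exact mul_ne_zero (sub_ne_zero.mpr h) (riemannZeta_ne_zero_of_one_le_re hs)

/-- The terms of the Euler–Maclaurin type series of `(s - 1) ζ(s) - 1`. -/
noncomputable def zetaTerm (n : ℕ) (s : ℂ) : ℂ :=
  (s - 1) * ((n + 1 : ℝ) : ℂ) ^ (-s) +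
    (((n + 2 : ℝ) : ℂ) ^ (1 - s) - ((n + 1 : ℝ) : ℂ) ^ (1 - s))

lemma differentiable_zetaTerm (n : ℕ) : Differentiable ℂ (zetaTerm n) := by
  have h1 : ((n + 1 : ℝ) : ℂ) ≠ 0 := by
    exact_mod_cast (by positivity : (n + 1 : ℝ) ≠ 0)
  have h2 : ((n + 2 : ℝ) : ℂ) ≠ 0 := by
    exact_mod_cast (by positivity : (n + 2 : ℝ) ≠ 0)
  unfold zetaTerm
  intro s
  refine .add (.mul (by fun_prop) ?_) (.sub ?_ ?_)
  · exact DifferentiableAt.const_cpow (by fun_prop) (Or.inl h1)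
  · exact DifferentiableAt.const_cpow (by fun_prop) (Or.inl h2)
  · exact DifferentiableAt.const_cpow (by fun_prop) (Or.inl h1)

lemma zetaTerm_eq_integral (n : ℕ) (s : ℂ) :
    zetaTerm n s = (s - 1) *
      ∫ x in (n + 1 : ℝ)..(n + 2), (((n + 1 : ℝ) : ℂ) ^ (-s) - (x : ℂ) ^ (-s)) := by
  rcases eq_or_ne s 1 with rfl | hs
  · simp [zetaTerm]
  have h0 : (0 : ℝ) ∉ uIcc (n + 1 : ℝ) (n + 2) := by
    rw [uIcc_of_le (by linarith)]
    intro h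
    have := h.1
    have : (0 : ℝ) ≤ n := n.cast_nonneg
    linarith
  have hs' : -s ≠ -1 := by simpa using hs
  have hint : IntervalIntegrable (fun x : ℝ ↦ (x : ℂ) ^ (-s)) volume (n + 1) (n + 2) :=
    intervalIntegral.intervalIntegrable_cpow (Or.inr h0)
  rw [intervalIntegral.integral_sub (by simp) hint, integral_cpow (Or.inr ⟨hs', h0⟩)]
  have h1 : -s + 1 ≠ 0 := by
    intro h
    exact hs (by linear_combination -h)
  simp only [intervalIntegral.integral_const, zetaTerm]
  rw [show (1 : ℂ) - s = -s + 1 by ring]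
  field_simp
  push_cast
  simp
  ring

lemma norm_cpow_sub_le_of_mem {n : ℕ} {s : ℂ} (hs : 0 < s.re) {x : ℝ}
    (hx : x ∈ Icc (n + 1 : ℝ) (n + 2)) :
    ‖((n + 1 : ℝ) : ℂ) ^ (-s) - (x : ℂ) ^ (-s)‖ ≤ ‖s‖ * (n + 1 : ℝ) ^ (-s.re - 1) := by
  have hn : (0 : ℝ) < n + 1 := by positivity
  have hd : ∀ y ∈ Icc (n + 1 : ℝ) (n + 2),
      HasDerivWithinAt (fun y : ℝ ↦ (y : ℂ) ^ (-s)) (-s * (y : ℂ) ^ (-s - 1))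
        (Icc (n + 1 : ℝ) (n + 2)) y := by
    intro y hy
    have hy0 : y ≠ 0 := by linarith [hy.1]
    have := (hasDerivAt_ofReal_cpow_const' (r := -s - 1) hy0 ?_).hasDerivWithinAt
      (s := Icc (n + 1 : ℝ) (n + 2))
    · have hne : -s - 1 + 1 ≠ 0 := by
        intro h
        have : s = 0 := by linear_combination -h
        simp [this] at hs
      refine (this.const_mul (-s)).congr_of_mem (fun z _ ↦ ?_) hy
      rw [show -s - 1 + 1 = -s by ring] at hne ⊢
      have hs0 : s ≠ 0 := neg_ne_zero.mp hne
      field_simp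
    · intro h
      have : s = 0 := by linear_combination -h
      simp [this] at hs
  have hb : ∀ y ∈ Icc (n + 1 : ℝ) (n + 2), ‖-s * (y : ℂ) ^ (-s - 1)‖ ≤
      ‖s‖ * (n + 1 : ℝ) ^ (-s.re - 1) := by
    intro y hy
    have hy0 : 0 < y := by linarith [hy.1]
    rw [norm_mul, norm_neg, norm_cpow_eq_rpow_re_of_pos hy0]
    simp only [sub_re, neg_re, one_re]
    exact mul_le_mul_of_nonneg_left
      (Real.rpow_le_rpow_of_nonpos hn hy.1 (by linarith)) (norm_nonneg s)
  have := Convex.norm_image_sub_le_of_norm_hasDerivWithin_le hd hb (convex_Icc _ _)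
    hx (left_mem_Icc.mpr (by linarith))
  refine this.trans ?_
  rw [Real.norm_eq_abs, abs_sub_comm, abs_of_nonneg (by linarith [hx.1])]
  exact mul_le_of_le_one_right (by positivity) (by linarith [hx.2])

lemma norm_cpow_sub_le_two_mul {n : ℕ} {s : ℂ} (hs : 0 < s.re) {x : ℝ}
    (hx : x ∈ Icc (n + 1 : ℝ) (n + 2)) :
    ‖((n + 1 : ℝ) : ℂ) ^ (-s) - (x : ℂ) ^ (-s)‖ ≤ 2 * (n + 1 : ℝ) ^ (-s.re) := by
  have hn : (0 : ℝ) < n + 1 := by positivity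
  refine (norm_sub_le _ _).trans ?_
  rw [norm_cpow_eq_rpow_re_of_pos hn, norm_cpow_eq_rpow_re_of_pos (by linarith [hx.1])]
  have : x ^ (-s).re ≤ (n + 1 : ℝ) ^ (-s).re :=
    Real.rpow_le_rpow_of_nonpos hn hx.1 (by simp; linarith)
  simp only [neg_re] at this ⊢
  linarith

lemma norm_zetaTerm_le (n : ℕ) {s : ℂ} (hs : 0 < s.re) :
    ‖zetaTerm n s‖ ≤ ‖s - 1‖ * (‖s‖ * (n + 1 : ℝ) ^ (-s.re - 1)) := by
  rw [zetaTerm_eq_integral, norm_mul]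
  gcongr
  refine (intervalIntegral.norm_integral_le_of_norm_le_const (C := ‖s‖ * (n + 1 : ℝ) ^ (-s.re - 1))
    fun x hx ↦ ?_).trans (by norm_num)
  rw [uIoc_of_le (by linarith)] at hx
  exact norm_cpow_sub_le_of_mem hs ⟨hx.1.le, hx.2⟩

lemma norm_zetaTerm_le_interpolated (n : ℕ) {s : ℂ} (hs : 0 < s.re) {θ : ℝ} (h0 : 0 ≤ θ)
    (h1 : θ ≤ 1) :
    ‖zetaTerm n s‖ ≤ ‖s - 1‖ * (2 * ‖s‖ ^ θ * (n + 1 : ℝ) ^ (-(s.re + θ))) := by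
  rw [zetaTerm_eq_integral, norm_mul]
  have hn : (0 : ℝ) < n + 1 := by positivity
  gcongr
  refine (intervalIntegral.norm_integral_le_of_norm_le_const
    (C := 2 * ‖s‖ ^ θ * (n + 1 : ℝ) ^ (-(s.re + θ))) fun x hx ↦ ?_).trans (by norm_num)
  rw [uIoc_of_le (by linarith)] at hx
  have hx' : x ∈ Icc (n + 1 : ℝ) (n + 2) := ⟨hx.1.le, hx.2⟩
  set N := ‖((n + 1 : ℝ) : ℂ) ^ (-s) - (x : ℂ) ^ (-s)‖ with hN
  calc N = N ^ θ * N ^ (1 - θ) := by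
        rw [← Real.rpow_add' (norm_nonneg _) (by norm_num), add_sub_cancel, Real.rpow_one]
    _ ≤ (‖s‖ * (n + 1 : ℝ) ^ (-s.re - 1)) ^ θ * (2 * (n + 1 : ℝ) ^ (-s.re)) ^ (1 - θ) := by
        have h1' : 0 ≤ 1 - θ := by linarith
        gcongr
        · exact norm_cpow_sub_le_of_mem hs hx'
        · exact norm_cpow_sub_le_two_mul hs hx'
    _ = 2 ^ (1 - θ) * ‖s‖ ^ θ * (n + 1 : ℝ) ^ (-(s.re + θ)) := by
        rw [Real.mul_rpow (by positivity) (by positivity),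
          Real.mul_rpow (by positivity) (by positivity), ← Real.rpow_mul hn.le,
          ← Real.rpow_mul hn.le,
          show -(s.re + θ) = (-s.re - 1) * θ + -s.re * (1 - θ) by ring, Real.rpow_add hn]
        ring
    _ ≤ 2 * ‖s‖ ^ θ * (n + 1 : ℝ) ^ (-(s.re + θ)) := by
        gcongr
        exact Real.rpow_le_self_of_one_le (by norm_num) (by linarith)

lemma summable_nat_add_one_rpow {a : ℝ} (ha : 1 < a) :
    Summable fun n : ℕ ↦ ((n : ℝ) + 1) ^ (-a) := by
  have := (summable_nat_add_iff 1).mpr (Real.summable_nat_rpow.mpr (by linarith : -a < -1))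
  simpa using this

lemma hasSum_zetaTerm_of_one_lt {s : ℂ} (hs : 1 < s.re) :
    HasSum (fun n ↦ zetaTerm n s) (zetaReg s - 1) := by
  have hs1 : s ≠ 1 := by rintro rfl; simp at hs
  have hz : HasSum (fun n : ℕ ↦ (s - 1) * ((n + 1 : ℝ) : ℂ) ^ (-s)) (zetaReg s) := by
    rw [zetaReg_of_ne hs1, zeta_eq_tsum_one_div_nat_add_one_cpow hs]
    have hsum : Summable fun n : ℕ ↦ 1 / (n + 1 : ℂ) ^ s := by
      have := (summable_nat_add_iff 1).mpr (Complex.summable_one_div_nat_cpow.mpr hs)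
      simpa using this
    refine (hsum.hasSum.mul_left (s - 1)).congr_fun fun n ↦ ?_
    push_cast
    rw [cpow_neg, one_div]
  have ht : HasSum (fun n : ℕ ↦ ((n + 2 : ℝ) : ℂ) ^ (1 - s) - ((n + 1 : ℝ) : ℂ) ^ (1 - s))
      (-1) := by
    have hlim : Tendsto (fun n : ℕ ↦ ((n + 1 : ℝ) : ℂ) ^ (1 - s)) atTop (𝓝 0) := by
      rw [tendsto_zero_iff_norm_tendsto_zero]
      have : ∀ n : ℕ, ‖((n + 1 : ℝ) : ℂ) ^ (1 - s)‖ = ((n + 1 : ℕ) : ℝ) ^ (-(s.re - 1)) := by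
        intro n
        rw [norm_cpow_eq_rpow_re_of_pos (by positivity)]
        simp
      simp_rw [this]
      exact ((tendsto_rpow_neg_atTop (by linarith : 0 < s.re - 1)).comp
        tendsto_natCast_atTop_atTop).comp (tendsto_add_atTop_nat 1)
    have hsummable : Summable fun n : ℕ ↦
        ((n + 2 : ℝ) : ℂ) ^ (1 - s) - ((n + 1 : ℝ) : ℂ) ^ (1 - s) := by
      have h1 : Summable fun n : ℕ ↦ zetaTerm n s := by
        refine Summable.of_norm_bounded (g := fun n : ℕ ↦ ‖s - 1‖ *
          (‖s‖ * (n + 1 : ℝ) ^ (-s.re - 1))) ?_ fun n ↦ norm_zetaTerm_le n (by linarith)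
        refine .mul_left _ (.mul_left _ ?_)
        simpa [neg_add, sub_eq_add_neg, add_comm] using
          summable_nat_add_one_rpow (by linarith : 1 < s.re + 1)
      refine (h1.sub hz.summable).congr fun n ↦ ?_
      simp [zetaTerm]
    refine (hsummable.hasSum_iff_tendsto_nat).mpr ?_
    have := fun N : ℕ ↦ Finset.sum_range_sub (fun n : ℕ ↦ ((n + 1 : ℝ) : ℂ) ^ (1 - s)) N
    have h2 : ∀ N : ℕ, ∑ n ∈ Finset.range N,
        (((n + 2 : ℝ) : ℂ) ^ (1 - s) - ((n + 1 : ℝ) : ℂ) ^ (1 - s))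
        = ((N + 1 : ℝ) : ℂ) ^ (1 - s) - 1 := by
      intro N
      rw [← sub_eq_zero, ← sub_eq_zero.mpr (this N)]
      push_cast
      simp only [add_assoc, one_add_one_eq_two]
      simp
    simp_rw [h2]
    simpa using hlim.sub_const 1
  exact hz.add ht

lemma zetaReg_eq_tsum {s : ℂ} (hs : 1 / 2 < s.re) :
    zetaReg s = 1 + ∑' n, zetaTerm n s := by
  let R := ‖s‖ + 4
  let U : Set ℂ := {z | 1 / 2 < z.re} ∩ Metric.ball 0 R
  have hUo : IsOpen U := (isOpen_lt continuous_const continuous_re).inter Metric.isOpen_ball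
  have hUc : Convex ℝ U := (convex_halfSpace_re_gt _).inter (convex_ball _ _)
  have hd : DifferentiableOn ℂ (fun z ↦ 1 + ∑' n, zetaTerm n z) U := by
    refine (differentiableOn_const 1).add (differentiableOn_tsum_of_summable_norm
      (u := fun n : ℕ ↦ (R + 1) * (R * (n + 1 : ℝ) ^ (-(3 / 2) : ℝ))) ?_
      (fun n ↦ (differentiable_zetaTerm n).differentiableOn) hUo fun n z hz ↦ ?_)
    · exact .mul_left _ (.mul_left _ (summable_nat_add_one_rpow (by norm_num)))
    · have hz1 : 1 / 2 < z.re := hz.1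
      have hz2 : ‖z‖ < R := by simpa using hz.2
      refine (norm_zetaTerm_le n (by linarith)).trans ?_
      have h3 : ‖z - 1‖ ≤ R + 1 := (norm_sub_le _ _).trans (by simp; linarith)
      have : (n + 1 : ℝ) ^ (-z.re - 1) ≤ (n + 1 : ℝ) ^ (-(3 / 2) : ℝ) :=
        Real.rpow_le_rpow_of_exponent_le (by simp) (by linarith)
      gcongr
  have h2U : (2 : ℂ) ∈ U := by
    refine ⟨by norm_num, ?_⟩
    simp only [Metric.mem_ball, dist_zero_right, R]
    norm_num
    linarith [norm_nonneg s]
  refine (differentiable_zetaReg.differentiableOn.analyticOnNhd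
    hUo).eqOn_of_preconnected_of_eventuallyEq
    (hd.analyticOnNhd hUo) hUc.isPreconnected h2U ?_ ⟨hs, by simp [R]⟩
  have : {z : ℂ | 1 < z.re} ∈ 𝓝 (2 : ℂ) :=
    (isOpen_lt continuous_const continuous_re).mem_nhds (by simp)
  filter_upwards [this] with z hz
  rw [(hasSum_zetaTerm_of_one_lt hz).tsum_eq]
  ring

lemma exists_norm_riemannZeta_le :
    ∃ C : ℝ, 0 < C ∧ ∀ s : ℂ, 39 / 40 ≤ s.re → s.re ≤ 3 → 1 / 2 ≤ |s.im| →
      ‖riemannZeta s‖ ≤ C * |s.im| ^ (1 / 20 : ℝ) := by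
  set S := ∑' n : ℕ, ((n : ℝ) + 1) ^ (-(41 / 40) : ℝ) with hS
  have hsum := summable_nat_add_one_rpow (by norm_num : (1 : ℝ) < 41 / 40)
  have hS0 : 0 ≤ S := tsum_nonneg fun n ↦ by positivity
  refine ⟨4 + 14 * S, by positivity, fun s h1 h2 h3 ↦ ?_⟩
  have hs1 : s ≠ 1 := by rintro rfl; norm_num at h3
  have hpos : 0 < ‖s - 1‖ := norm_pos_iff.mpr (sub_ne_zero.mpr hs1)
  have him : 1 / 2 ≤ ‖s - 1‖ := h3.trans (by simpa using abs_im_le_norm (s - 1))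
  have hns : ‖s‖ ≤ 7 * |s.im| := by
    have := norm_le_abs_re_add_abs_im s
    rw [abs_of_nonneg (by linarith : 0 ≤ s.re)] at this
    linarith
  have hterm : ∀ n, ‖zetaTerm n s‖ ≤ ‖s - 1‖ * (2 * ‖s‖ ^ (1 / 20 : ℝ)) *
      ((n : ℝ) + 1) ^ (-(41 / 40) : ℝ) := by
    intro n
    refine (norm_zetaTerm_le_interpolated n (by linarith) (by norm_num)
      (by norm_num : (1 / 20 : ℝ) ≤ 1)).trans ?_
    rw [← mul_assoc]
    gcongr
    · simp
    · linarith
  have htsum : ‖∑' n, zetaTerm n s‖ ≤ ‖s - 1‖ * (2 * ‖s‖ ^ (1 / 20 : ℝ)) * S := by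
    rw [hS, ← tsum_mul_left]
    exact tsum_of_norm_bounded (hsum.mul_left _).hasSum hterm
  have hkey : ‖s - 1‖ * ‖riemannZeta s‖ ≤ 1 + ‖s - 1‖ * (2 * ‖s‖ ^ (1 / 20 : ℝ)) * S := by
    rw [← norm_mul, ← zetaReg_of_ne hs1, zetaReg_eq_tsum (by linarith)]
    exact (norm_add_le _ _).trans (by simpa using htsum)
  have h7 : ‖s‖ ^ (1 / 20 : ℝ) ≤ 7 * |s.im| ^ (1 / 20 : ℝ) := by
    calc ‖s‖ ^ (1 / 20 : ℝ) ≤ (7 * |s.im|) ^ (1 / 20 : ℝ) := by gcongr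
      _ = 7 ^ (1 / 20 : ℝ) * |s.im| ^ (1 / 20 : ℝ) := Real.mul_rpow (by norm_num) (by positivity)
      _ ≤ _ := by
        gcongr
        exact Real.rpow_le_self_of_one_le (by norm_num) (by norm_num)
  have hlow : 1 / 2 ≤ |s.im| ^ (1 / 20 : ℝ) := by
    calc (1 / 2 : ℝ) = (1 / 2) ^ (1 : ℝ) := by norm_num
      _ ≤ (1 / 2) ^ (1 / 20 : ℝ) :=
        Real.rpow_le_rpow_of_exponent_ge (by norm_num) (by norm_num) (by norm_num)
      _ ≤ _ := by gcongr
  have hfin : ‖s - 1‖ * ‖riemannZeta s‖ ≤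
      ‖s - 1‖ * ((4 + 14 * S) * |s.im| ^ (1 / 20 : ℝ)) := by
    refine hkey.trans ?_
    have e1 : 1 ≤ ‖s - 1‖ * (4 * |s.im| ^ (1 / 20 : ℝ)) := by nlinarith
    have e2 : ‖s - 1‖ * (2 * ‖s‖ ^ (1 / 20 : ℝ)) * S ≤
        ‖s - 1‖ * (2 * (7 * |s.im| ^ (1 / 20 : ℝ))) * S := by gcongr
    nlinarith
  exact le_of_mul_le_mul_left hfin hpos

end ResonatorProduct

namespace ResonatorProduct

open Complex Filter Topology MeasureTheory Set

lemma exists_norm_deriv_zetaReg_le :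
    ∃ C : ℝ, 0 < C ∧ ∀ s : ℂ, 1 ≤ s.re → s.re ≤ 2 → 1 ≤ |s.im| →
      ‖deriv zetaReg s‖ ≤ C * (|s.im| * |s.im| ^ (1 / 20 : ℝ)) ∧
      ‖deriv (deriv zetaReg) s‖ ≤ C * (|s.im| * |s.im| ^ (1 / 20 : ℝ)) := by
  obtain ⟨C, hC, hζ⟩ := exists_norm_riemannZeta_le
  refine ⟨3200 * (8 * C * 2), by positivity, fun s h1 h2 h3 ↦ ?_⟩
  set M := |s.im| * |s.im| ^ (1 / 20 : ℝ) with hM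
  have hM0 : 0 ≤ M := by positivity
  have hsph : ∀ z ∈ Metric.sphere s (1 / 40), ‖zetaReg z‖ ≤ 8 * C * 2 * M := by
    intro z hz
    have hz' : ‖z - s‖ = 1 / 40 := by simpa [dist_eq_norm] using hz
    have hre := abs_le.mp ((abs_re_le_norm (z - s)).trans hz'.le)
    have him := (abs_im_le_norm (z - s)).trans hz'.le
    rw [sub_re] at hre
    rw [sub_im] at him
    have him1 : |z.im| ≤ |s.im| + 1 / 40 := by
      have := abs_sub_abs_le_abs_sub z.im s.im
      linarith
    have him2 : |s.im| - 1 / 40 ≤ |z.im| := by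
      have := abs_sub_abs_le_abs_sub s.im z.im
      rw [abs_sub_comm] at this
      linarith
    have hz1 : z ≠ 1 := by
      rintro rfl
      norm_num at him2
      linarith
    rw [zetaReg_of_ne hz1, norm_mul]
    have e1 : ‖z - 1‖ ≤ 8 * |s.im| := by
      have := norm_le_abs_re_add_abs_im (z - 1)
      have h4 : |(z - 1).re| ≤ 2 := by
        rw [sub_re, one_re, abs_le]
        constructor <;> linarith
      have h5 : (z - 1).im = z.im := by simp
      rw [h5] at this
      linarith
    have e2 : ‖riemannZeta z‖ ≤ C * (2 * |s.im| ^ (1 / 20 : ℝ)) := by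
      refine (hζ z (by linarith) (by linarith) (by linarith)).trans ?_
      gcongr
      calc |z.im| ^ (1 / 20 : ℝ) ≤ (2 * |s.im|) ^ (1 / 20 : ℝ) := by gcongr; linarith
        _ = 2 ^ (1 / 20 : ℝ) * |s.im| ^ (1 / 20 : ℝ) := Real.mul_rpow (by norm_num) (by positivity)
        _ ≤ _ := by
          gcongr
          exact Real.rpow_le_self_of_one_le (by norm_num) (by norm_num)
    calc ‖z - 1‖ * ‖riemannZeta z‖ ≤ (8 * |s.im|) * (C * (2 * |s.im| ^ (1 / 20 : ℝ))) := by gcongr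
      _ = _ := by rw [hM]; ring
  have hd : DiffContOnCl ℂ zetaReg (Metric.ball s (1 / 40)) :=
    differentiable_zetaReg.diffContOnCl
  have b1 := norm_iteratedDeriv_le_of_forall_mem_sphere_norm_le 1 (by norm_num) hd hsph
  have b2 := norm_iteratedDeriv_le_of_forall_mem_sphere_norm_le 2 (by norm_num) hd hsph
  have hp : 0 ≤ C * M := by positivity
  rw [iteratedDeriv_one] at b1
  rw [iteratedDeriv_succ, iteratedDeriv_one] at b2
  norm_num at b1 b2
  constructor <;> nlinarith

lemma one_le_norm_riemannZeta_product {x : ℝ} (hx : 0 < x) (y : ℝ) :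
    1 ≤ ‖riemannZeta (1 + x)‖ ^ 3 * ‖riemannZeta (1 + x + I * y)‖ ^ 4 *
      ‖riemannZeta (1 + x + 2 * I * y)‖ := by
  have h := DirichletCharacter.norm_LFunction_product_ge_one (N := 1) 1 hx y
  simpa [DirichletCharacter.LFunctionTrivChar, DirichletCharacter.LFunction_modOne_eq] using h

lemma exists_le_norm_riemannZeta_pow_four :
    ∃ c : ℝ, 0 < c ∧ ∀ s : ℂ, 1 < s.re → s.re ≤ 2 → 1 ≤ |s.im| →
      c * (s.re - 1) ^ 3 / |s.im| ^ (1 / 20 : ℝ) ≤ ‖riemannZeta s‖ ^ 4 := by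
  obtain ⟨C, hC, hζ⟩ := exists_norm_riemannZeta_le
  obtain ⟨K, hK⟩ := (isCompact_Icc (a := (1 : ℝ)) (b := 2)).exists_bound_of_continuousOn
    (f := fun x : ℝ ↦ zetaReg x)
    (differentiable_zetaReg.continuous.comp continuous_ofReal).continuousOn
  have hK0 : 0 < K := by
    refine lt_of_lt_of_le ?_ (hK 1 (by norm_num))
    simp [zetaReg_one]
  refine ⟨1 / (K ^ 3 * (C * 2)), by positivity, fun s h1 h2 h3 ↦ ?_⟩
  set x := s.re - 1 with hx
  have hx0 : 0 < x := by linarith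
  have hs : (1 + x + I * s.im : ℂ) = s := by
    apply Complex.ext <;> simp [hx]
  have hprod := one_le_norm_riemannZeta_product hx0 s.im
  rw [hs] at hprod
  have e1 : ‖riemannZeta (1 + x)‖ ≤ K / x := by
    have h4 : (1 + x : ℂ) ≠ 1 := by simpa using hx0.ne'
    have := hK (1 + x) ⟨by linarith, by linarith⟩
    rw [ofReal_add, ofReal_one, zetaReg_of_ne h4, norm_mul] at this
    rw [le_div_iff₀ hx0]
    simpa [abs_of_pos hx0, mul_comm] using this
  have e2 : ‖riemannZeta (1 + x + 2 * I * s.im)‖ ≤ C * (2 * |s.im| ^ (1 / 20 : ℝ)) := by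
    have hre : (1 + x + 2 * I * s.im : ℂ).re = s.re := by simp [hx]
    have him : (1 + x + 2 * I * s.im : ℂ).im = 2 * s.im := by simp
    have := hζ (1 + x + 2 * I * s.im) (by rw [hre]; linarith) (by rw [hre]; linarith)
      (by rw [him, abs_mul]; norm_num; linarith)
    refine this.trans ?_
    rw [him, abs_mul, Real.mul_rpow (by positivity) (by positivity)]
    gcongr
    simpa using Real.rpow_le_self_of_one_le (by norm_num : (1 : ℝ) ≤ 2)
      (by norm_num : (1 / 20 : ℝ) ≤ 1)
  have hT : 0 < |s.im| ^ (1 / 20 : ℝ) := by positivity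
  have h5 : 1 ≤ (K / x) ^ 3 * ‖riemannZeta s‖ ^ 4 * (C * (2 * |s.im| ^ (1 / 20 : ℝ))) :=
    hprod.trans (by gcongr)
  rw [div_le_iff₀ hT, div_mul_eq_mul_div, one_mul, div_le_iff₀ (by positivity)]
  rw [div_pow, div_mul_eq_mul_div, div_mul_eq_mul_div, le_div_iff₀ (by positivity)] at h5
  linarith

lemma exists_le_norm_zetaReg :
    ∃ c : ℝ, 0 < c ∧ ∀ s : ℂ, 1 ≤ s.re → s.re ≤ 2 → 1 ≤ |s.im| →
      c * (|s.im| / (|s.im| ^ (1 / 20 : ℝ)) ^ 4) ≤ ‖zetaReg s‖ := by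
  obtain ⟨C, hC, hd⟩ := exists_norm_deriv_zetaReg_le
  obtain ⟨c, hc, hζ⟩ := exists_le_norm_riemannZeta_pow_four
  set κ := min 1 (c / (16 * C ^ 4)) with hκ
  have hκ0 : 0 < κ := by positivity
  have hκ1 : κ ≤ 1 := min_le_left _ _
  have hκ2 : 16 * C ^ 4 * κ ≤ c := by
    have : κ ≤ c / (16 * C ^ 4) := min_le_right _ _
    rw [le_div_iff₀ (by positivity)] at this
    linarith
  obtain ⟨m, hm0, hm⟩ : ∃ m : ℝ, 0 < m ∧ m ^ 4 = c * κ ^ 3 :=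
    ⟨(c * κ ^ 3) ^ (1 / 4 : ℝ), by positivity, by
      rw [← Real.rpow_natCast, ← Real.rpow_mul (by positivity)]; norm_num⟩
  have hmκ : 2 * C * κ ≤ m := by
    refine le_of_pow_le_pow_left₀ (n := 4) (by norm_num) hm0.le ?_
    rw [hm]
    have : 0 ≤ κ ^ 3 := by positivity
    nlinarith
  refine ⟨m / 2, by positivity, fun s h1 h2 h3 ↦ ?_⟩
  set τ := |s.im| with hτ
  set T := τ ^ (1 / 20 : ℝ) with hT
  have hT1 : 1 ≤ T := Real.one_le_rpow h3 (by norm_num)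
  have hT0 : 0 < T := by linarith
  set η := κ / T ^ 5 with hη
  have hη0 : 0 < η := by positivity
  have hη1 : η ≤ 1 := (div_le_one (by positivity)).mpr (hκ1.trans (one_le_pow₀ hT1))
  have key : ∀ z : ℂ, z.im = s.im → 1 + η ≤ z.re → z.re ≤ 2 → m * (τ / T ^ 4) ≤ ‖zetaReg z‖ := by
    intro z him hre hre2
    have hz1 : z ≠ 1 := by
      rintro rfl
      simp at hre
      linarith
    have hζz := hζ z (by linarith) hre2 (him ▸ h3)
    rw [him, ← hτ, ← hT] at hζz
    have hm4 : (m / T ^ 4) ^ 4 ≤ ‖riemannZeta z‖ ^ 4 := by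
      refine le_trans ?_ hζz
      have e : (m / T ^ 4) ^ 4 = c * η ^ 3 / T := by
        rw [div_pow, hm, hη]
        field_simp
      rw [e]
      gcongr
      linarith
    have hm1 : m / T ^ 4 ≤ ‖riemannZeta z‖ :=
      le_of_pow_le_pow_left₀ (n := 4) (by norm_num) (norm_nonneg _) hm4
    rw [zetaReg_of_ne hz1, norm_mul]
    have : τ ≤ ‖z - 1‖ := by
      rw [hτ, ← him]
      simpa using abs_im_le_norm (z - 1)
    calc m * (τ / T ^ 4) = τ * (m / T ^ 4) := by ring
      _ ≤ _ := by gcongr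
  rcases le_total (1 + η) s.re with h | h
  · refine le_trans ?_ (key s rfl h h2)
    gcongr
    linarith
  · set z : ℂ := ⟨1 + η, s.im⟩ with hz
    have hkz := key z rfl le_rfl (by simp [hz]; linarith)
    let S : Set ℂ := {w | w.im = s.im} ∩ {w | 1 ≤ w.re} ∩ {w | w.re ≤ 2}
    have hS : Convex ℝ S := by
      exact ((convex_hyperplane (f := Complex.im) ⟨by intro a b; simp, by intro a b; simp⟩
        s.im).inter (convex_halfSpace_re_ge 1)).inter (convex_halfSpace_re_le 2)
    have hmv := Convex.norm_image_sub_le_of_norm_deriv_le (f := zetaReg) (C := C * (τ * T))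
      (s := S) (x := z) (y := s) (fun w _ ↦ differentiable_zetaReg w) (fun w hw ↦ ?_) hS
      ⟨⟨rfl, by simp [hz]; linarith⟩, by simp [hz]; linarith⟩ ⟨⟨rfl, h1⟩, h2⟩
    · have hdist : ‖s - z‖ ≤ η := by
        have h6 := norm_le_abs_re_add_abs_im (s - z)
        have h7 : |(s - z).re| ≤ η := by
          rw [sub_re, hz, abs_le]
          constructor <;> simp <;> linarith
        have h8 : (s - z).im = 0 := by simp [hz]
        rw [h8, abs_zero, add_zero] at h6
        exact h6.trans h7
      have h9 : ‖zetaReg z‖ ≤ ‖zetaReg s‖ + ‖zetaReg s - zetaReg z‖ := by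
        rw [← norm_neg (zetaReg s - zetaReg z), neg_sub]
        exact norm_le_norm_add_norm_sub' _ _
      have h10 : ‖zetaReg s - zetaReg z‖ ≤ C * κ * (τ / T ^ 4) := by
        refine hmv.trans ?_
        calc C * (τ * T) * ‖s - z‖ ≤ C * (τ * T) * η := by gcongr
          _ = C * κ * (τ / T ^ 4) := by rw [hη]; field_simp
      have h11 : C * κ * (τ / T ^ 4) ≤ m / 2 * (τ / T ^ 4) := by
        gcongr
        linarith
      linarith
    · have hw1 : w.im = s.im := hw.1.1
      have := (hd w hw.1.2 hw.2 (hw1 ▸ h3)).1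
      rwa [hw1] at this

/-- The logarithmic derivative of `(s - 1) ζ(s) / s`. -/
noncomputable def logDerivReg (s : ℂ) : ℂ := deriv zetaReg s / zetaReg s - 1 / s

lemma hasDerivAt_logDerivReg {s : ℂ} (hs : zetaReg s ≠ 0) (hs0 : s ≠ 0) :
    HasDerivAt logDerivReg
      (deriv (deriv zetaReg) s / zetaReg s - (deriv zetaReg s / zetaReg s) ^ 2 + 1 / s ^ 2) s := by
  have h1 : HasDerivAt zetaReg (deriv zetaReg s) s := (differentiable_zetaReg s).hasDerivAt
  have h2 : HasDerivAt (deriv zetaReg) (deriv (deriv zetaReg) s) s :=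
    (differentiable_zetaReg.contDiff.differentiable_deriv_two s).hasDerivAt
  have h3 := (h2.div h1 hs).sub ((hasDerivAt_id s).inv hs0)
  simp only [id] at h3
  have h4 : logDerivReg = fun z ↦ deriv zetaReg z / zetaReg z - z⁻¹ := by
    ext z; simp [logDerivReg]
  rw [h4]
  refine h3.congr_deriv ?_
  field_simp
  ring

lemma analyticAt_logDerivReg {s : ℂ} (hs : zetaReg s ≠ 0) (hs0 : s ≠ 0) :
    AnalyticAt ℂ logDerivReg s := by
  have h1 : AnalyticAt ℂ zetaReg s := differentiable_zetaReg.analyticAt s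
  exact (h1.deriv.div h1 hs).sub (analyticAt_const.div analyticAt_id hs0)

lemma exists_norm_logDerivReg_le :
    ∃ C : ℝ, 0 < C ∧ ∀ s : ℂ, 1 ≤ s.re → s.re ≤ 2 →
      ‖logDerivReg s‖ ≤ C * (1 + |s.im|) ^ (1 / 2 : ℝ) ∧
      ‖deriv logDerivReg s‖ ≤ C * (1 + |s.im|) ^ (1 / 2 : ℝ) := by
  obtain ⟨C, hC, hd⟩ := exists_norm_deriv_zetaReg_le
  obtain ⟨c, hc, hl⟩ := exists_le_norm_zetaReg
  let S : Set ℂ := Icc 1 2 ×ℂ Icc (-1) 1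
  have hS : IsCompact S := isCompact_Icc.reProdIm isCompact_Icc
  have hS1 : ∀ s ∈ S, AnalyticAt ℂ logDerivReg s := by
    intro s hs
    have h1 : 1 ≤ s.re := hs.1.1
    exact analyticAt_logDerivReg (zetaReg_ne_zero h1) (by rintro rfl; norm_num at h1)
  obtain ⟨K1, hK1⟩ := hS.exists_bound_of_continuousOn (f := logDerivReg)
    fun s hs ↦ (hS1 s hs).continuousAt.continuousWithinAt
  obtain ⟨K2, hK2⟩ := hS.exists_bound_of_continuousOn (f := deriv logDerivReg)
    fun s hs ↦ (hS1 s hs).deriv.continuousAt.continuousWithinAt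
  set Q := C / c with hQ
  have hQ0 : 0 < Q := by positivity
  refine ⟨|K1| + |K2| + (Q + Q ^ 2 + 1), by positivity, fun s h1 h2 ↦ ?_⟩
  have hone : 1 ≤ (1 + |s.im|) ^ (1 / 2 : ℝ) :=
    Real.one_le_rpow (by linarith [abs_nonneg s.im]) (by norm_num)
  rcases le_total |s.im| 1 with h3 | h3
  · have hsS : s ∈ S := ⟨⟨h1, h2⟩, abs_le.mp h3⟩
    have e1 := (hK1 s hsS).trans (le_abs_self _)
    have e2 := (hK2 s hsS).trans (le_abs_self _)
    have := abs_nonneg K1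
    have := abs_nonneg K2
    have : 0 ≤ Q ^ 2 := by positivity
    constructor <;> nlinarith
  · have hz := zetaReg_ne_zero h1
    have hs0 : s ≠ 0 := by rintro rfl; norm_num at h1
    have hs1 : 1 ≤ ‖s‖ := h1.trans ((le_abs_self _).trans (abs_re_le_norm s))
    obtain ⟨d1, d2⟩ := hd s h1 h2 h3
    have l1 := hl s h1 h2 h3
    set τ := |s.im| with hτ
    set T := τ ^ (1 / 20 : ℝ) with hT
    have hT1 : 1 ≤ T := Real.one_le_rpow h3 (by norm_num)
    have hT0 : 0 < T := by linarith
    have hτ0 : 0 < τ := by linarith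
    have hT10 : T ^ 10 ≤ (1 + τ) ^ (1 / 2 : ℝ) := by
      rw [hT, ← Real.rpow_natCast, ← Real.rpow_mul hτ0.le]
      norm_num
      gcongr
      linarith
    have hquot : ∀ w : ℂ, ‖w‖ ≤ C * (τ * T) → ‖w / zetaReg s‖ ≤ Q * T ^ 5 := by
      intro w hw
      rw [norm_div, div_le_iff₀ (norm_pos_iff.mpr hz)]
      calc ‖w‖ ≤ C * (τ * T) := hw
        _ = Q * T ^ 5 * (c * (τ / T ^ 4)) := by rw [hQ]; field_simp
        _ ≤ _ := by gcongr
    have q1 := hquot _ d1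
    have q2 := hquot _ d2
    have hT5 : T ^ 5 ≤ T ^ 10 := pow_le_pow_right₀ hT1 (by norm_num)
    have hT10' : 1 ≤ T ^ 10 := one_le_pow₀ hT1
    have hinv : ‖1 / s‖ ≤ 1 := by
      rw [norm_div, norm_one]
      exact (div_le_one (by linarith)).mpr hs1
    have hinv2 : ‖1 / s ^ 2‖ ≤ 1 := by
      rw [norm_div, norm_one, norm_pow]
      exact (div_le_one (by positivity)).mpr (one_le_pow₀ hs1)
    have hsq : ‖(deriv zetaReg s / zetaReg s) ^ 2‖ ≤ Q ^ 2 * T ^ 10 := by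
      rw [norm_pow]
      calc _ ≤ (Q * T ^ 5) ^ 2 := by gcongr
        _ = _ := by ring
    have b1 : ‖logDerivReg s‖ ≤ (Q + Q ^ 2 + 1) * T ^ 10 := by
      refine (norm_sub_le _ _).trans ?_
      have : 0 ≤ Q ^ 2 * T ^ 10 := by positivity
      nlinarith
    have b2 : ‖deriv logDerivReg s‖ ≤ (Q + Q ^ 2 + 1) * T ^ 10 := by
      rw [(hasDerivAt_logDerivReg hz hs0).deriv]
      refine (norm_add_le _ _).trans ((add_le_add_left (norm_sub_le _ _) _).trans ?_)
      nlinarith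
    have hfin : (Q + Q ^ 2 + 1) * T ^ 10 ≤
        (|K1| + |K2| + (Q + Q ^ 2 + 1)) * (1 + τ) ^ (1 / 2 : ℝ) := by
      exact mul_le_mul (by linarith [abs_nonneg K1, abs_nonneg K2]) hT10 (by positivity)
        (by positivity)
    exact ⟨b1.trans hfin, b2.trans hfin⟩

end ResonatorProduct

namespace ResonatorProduct

open Complex Filter Topology MeasureTheory Set
open scoped ArithmeticFunction.vonMangoldt

/-- The coefficients `Λ(n) / log n` of `log ζ`. -/
noncomputable def logZetaCoeff (n : ℕ) : ℝ := Λ n / Real.log n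

lemma logZetaCoeff_nonneg (n : ℕ) : 0 ≤ logZetaCoeff n :=
  div_nonneg ArithmeticFunction.vonMangoldt_nonneg (Real.log_natCast_nonneg n)

lemma logZetaCoeff_le_one (n : ℕ) : logZetaCoeff n ≤ 1 :=
  div_le_one_of_le₀ ArithmeticFunction.vonMangoldt_le_log (Real.log_natCast_nonneg n)

/-- The Dirichlet series of `log ζ` on `1 < re s`. -/
noncomputable def logZeta (s : ℂ) : ℂ := LSeries (fun n ↦ (logZetaCoeff n : ℂ)) s

lemma lseriesSummable_logZetaCoeff {s : ℂ} (hs : 1 < s.re) :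
    LSeriesSummable (fun n ↦ (logZetaCoeff n : ℂ)) s :=
  LSeriesSummable_of_bounded_of_one_lt_re (m := 1) (fun n _ ↦ by
    rw [norm_real, Real.norm_of_nonneg (logZetaCoeff_nonneg n)]
    exact logZetaCoeff_le_one n) hs

lemma exp_logZeta {s : ℂ} (hs : 1 < s.re) : exp (logZeta s) = riemannZeta s := by
  rw [← riemannZeta_eq_exp_LSeries hs, logZeta]
  simp [logZetaCoeff]

lemma hasDerivAt_logZeta {s : ℂ} (hs : 1 < s.re) :
    HasDerivAt logZeta (deriv riemannZeta s / riemannZeta s) s := by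
  have h : LSeries.abscissaOfAbsConv (fun n ↦ (logZetaCoeff n : ℂ)) ≤ 1 :=
    LSeries.abscissaOfAbsConv_le_of_le_const ⟨1, fun n _ ↦ by
      rw [norm_real, Real.norm_of_nonneg (logZetaCoeff_nonneg n)]
      exact logZetaCoeff_le_one n⟩
  have h' := LSeries_hasDerivAt (f := fun n ↦ (logZetaCoeff n : ℂ)) (s := s)
    (h.trans_lt (by exact_mod_cast hs))
  refine h'.congr_deriv ?_
  have : LSeries (LSeries.logMul fun n ↦ (logZetaCoeff n : ℂ)) s =
      LSeries (fun n ↦ (Λ n : ℂ)) s := by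
    refine LSeries_congr (fun {n} hn ↦ ?_) s
    rcases eq_or_ne n 1 with rfl | h1
    · simp [LSeries.logMul]
    · have : (Real.log n : ℂ) ≠ 0 := by
        exact_mod_cast (Real.log_pos (by exact_mod_cast (by omega : 1 < n))).ne'
      rw [LSeries.logMul, logZetaCoeff, ofReal_div, ← natCast_log]
      field_simp
  rw [this, ArithmeticFunction.LSeries_vonMangoldt_eq_deriv_riemannZeta_div hs]
  ring

/-- The logarithm of `(s - 1) ζ(s) / s` on `1 < re s`. -/
noncomputable def logRatio (s : ℂ) : ℂ := logZeta s - (log s - log (s - 1))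

lemma exp_logRatio {s : ℂ} (hs : 1 < s.re) : exp (logRatio s) = zetaReg s / s := by
  have h0 : s ≠ 0 := by rintro rfl; simp at hs; linarith
  have h1 : s ≠ 1 := by rintro rfl; simp at hs
  rw [logRatio, exp_sub, exp_sub, exp_log h0, exp_log (sub_ne_zero.mpr h1), exp_logZeta hs,
    zetaReg_of_ne h1]
  have := sub_ne_zero.mpr h1
  field_simp

lemma hasDerivAt_logRatio {s : ℂ} (hs : 1 < s.re) :
    HasDerivAt logRatio (logDerivReg s) s := by
  have h0 : s ≠ 0 := by rintro rfl; simp at hs; linarith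
  have h1 : s ≠ 1 := by rintro rfl; simp at hs
  have h1' := sub_ne_zero.mpr h1
  have hz := riemannZeta_ne_zero_of_one_le_re hs.le
  have ha := (hasDerivAt_id s).clog (Or.inl (by simp; linarith))
  have hb := ((hasDerivAt_id s).sub_const 1).clog (Or.inl (by simp; linarith))
  refine ((hasDerivAt_logZeta hs).sub (ha.sub hb)).congr_deriv ?_
  have hd : deriv zetaReg s = riemannZeta s + (s - 1) * deriv riemannZeta s := by
    have h2 : zetaReg =ᶠ[𝓝 s] fun z ↦ (z - 1) * riemannZeta z := by
      filter_upwards [isOpen_ne.mem_nhds h1] with z hz using zetaReg_of_ne hz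
    rw [h2.deriv_eq]
    have h3 := ((hasDerivAt_id s).sub_const 1).fun_mul
      (differentiableAt_riemannZeta h1).hasDerivAt
    simpa using h3.deriv
  rw [logDerivReg, hd, zetaReg_of_ne h1]
  simp only [id]
  field_simp
  ring

lemma logRatio_im_ofReal {x : ℝ} (hx : 1 < x) : (logRatio x).im = 0 := by
  have h1 : (logZeta x).im = 0 := by
    rw [logZeta, LSeries, im_tsum (lseriesSummable_logZetaCoeff (by simpa using hx))]
    refine (tsum_congr fun n ↦ ?_).trans tsum_zero
    rw [LSeries.term_def]
    split_ifs with h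
    · simp
    · rw [← ofReal_natCast, ← ofReal_cpow (by positivity), ← ofReal_div, ofReal_im]
  have h2 : ((x : ℂ) - 1) = ((x - 1 : ℝ) : ℂ) := by push_cast; ring
  rw [logRatio, h2, ← ofReal_log (by linarith), ← ofReal_log (by linarith), ← ofReal_sub, sub_im,
    h1, ofReal_im, sub_zero]

lemma tendsto_logRatio : Tendsto (fun x : ℝ ↦ logRatio x) (𝓝[>] 1) (𝓝 0) := by
  have hcont : ContinuousAt (fun x : ℝ ↦ log (zetaReg x / x)) 1 := by
    have h1 : ContinuousAt (fun x : ℝ ↦ zetaReg x / x) 1 :=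
      (differentiable_zetaReg.continuous.comp continuous_ofReal).continuousAt.div
        continuous_ofReal.continuousAt (by simp)
    exact h1.clog (by simp [zetaReg_one])
  have h := hcont.tendsto.mono_left (nhdsWithin_le_nhds (s := Ioi 1))
  simp only [ofReal_one, zetaReg_one, div_one, log_one] at h
  refine h.congr' ?_
  filter_upwards [self_mem_nhdsWithin] with x hx
  rw [← exp_logRatio (by simpa using hx)]
  have hi := logRatio_im_ofReal hx
  exact log_exp (by rw [hi]; linarith [Real.pi_pos]) (by rw [hi]; exact Real.pi_pos.le)

lemma exists_norm_logRatio_le :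
    ∃ C : ℝ, 0 < C ∧ ∀ s : ℂ, 1 < s.re → s.re ≤ 2 →
      ‖logRatio s‖ ≤ C * (1 + |s.im|) ^ (1 / 2 : ℝ) := by
  obtain ⟨C, hC, hd⟩ := exists_norm_logDerivReg_le
  set K := ∑' n, ‖LSeries.term (fun n ↦ (logZetaCoeff n : ℂ)) 2 n‖ with hK
  have hK0 : 0 ≤ K := tsum_nonneg fun n ↦ norm_nonneg _
  have hlog : ∀ (a t : ℝ), 1 ≤ a → a ≤ 2 → ‖log (⟨a, t⟩ : ℂ)‖ ≤
      (4 + Real.pi) * (1 + |t|) ^ (1 / 2 : ℝ) := by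
    intro a t h1 h2
    have hr1 : (1 : ℝ) ≤ ‖(⟨a, t⟩ : ℂ)‖ :=
      h1.trans ((le_abs_self a).trans (abs_re_le_norm (⟨a, t⟩ : ℂ)))
    have hr2 : ‖(⟨a, t⟩ : ℂ)‖ ≤ 2 * (1 + |t|) := by
      refine (norm_le_abs_re_add_abs_im _).trans ?_
      simp only [abs_of_nonneg (by linarith : 0 ≤ a)]
      linarith [abs_nonneg t]
    have h3 : ‖log (⟨a, t⟩ : ℂ)‖ ≤ Real.log ‖(⟨a, t⟩ : ℂ)‖ + Real.pi := by
      refine (norm_le_abs_re_add_abs_im _).trans ?_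
      rw [log_re, log_im, abs_of_nonneg (Real.log_nonneg hr1)]
      gcongr
      exact abs_arg_le_pi _
    have h4 : Real.log ‖(⟨a, t⟩ : ℂ)‖ ≤ 4 * (1 + |t|) ^ (1 / 2 : ℝ) := by
      refine (Real.log_le_rpow_div (by positivity) (by norm_num : (0 : ℝ) < 1 / 2)).trans ?_
      have : ‖(⟨a, t⟩ : ℂ)‖ ^ (1 / 2 : ℝ) ≤ 2 * (1 + |t|) ^ (1 / 2 : ℝ) := by
        calc ‖(⟨a, t⟩ : ℂ)‖ ^ (1 / 2 : ℝ) ≤ (2 * (1 + |t|)) ^ (1 / 2 : ℝ) := by gcongr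
          _ = 2 ^ (1 / 2 : ℝ) * (1 + |t|) ^ (1 / 2 : ℝ) :=
            Real.mul_rpow (by norm_num) (by positivity)
          _ ≤ _ := by
            gcongr
            calc (2 : ℝ) ^ (1 / 2 : ℝ) ≤ 2 ^ (1 : ℝ) :=
                Real.rpow_le_rpow_of_exponent_le (by norm_num) (by norm_num)
              _ = 2 := by simp
      linarith
    have h5 : (1 : ℝ) ≤ (1 + |t|) ^ (1 / 2 : ℝ) :=
      Real.one_le_rpow (by linarith [abs_nonneg t]) (by norm_num)
    nlinarith [Real.pi_pos]
  refine ⟨K + 2 * (4 + Real.pi) + C, by positivity, fun s h1 h2 ↦ ?_⟩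
  set T := (1 + |s.im|) ^ (1 / 2 : ℝ) with hT
  have hT1 : 1 ≤ T := Real.one_le_rpow (by linarith [abs_nonneg s.im]) (by norm_num)
  set z : ℂ := ⟨2, s.im⟩ with hz
  have hzb : ‖logRatio z‖ ≤ (K + 2 * (4 + Real.pi)) * T := by
    have e1 : ‖logZeta z‖ ≤ K := by
      refine (norm_tsum_le_tsum_norm (lseriesSummable_logZetaCoeff (by simp [hz])).norm).trans ?_
      refine le_of_eq (tsum_congr fun n ↦ ?_)
      rw [LSeries.norm_term_eq, LSeries.norm_term_eq]
      simp [hz]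
    have e2 : z - 1 = ⟨1, s.im⟩ := by apply Complex.ext <;> simp [hz]; norm_num
    have e3 := hlog 2 s.im (by norm_num) le_rfl
    have e4 := hlog 1 s.im le_rfl (by norm_num)
    rw [← e2] at e4
    refine (norm_sub_le _ _).trans ((add_le_add e1 ((norm_sub_le _ _).trans
      (add_le_add e3 e4))).trans ?_)
    nlinarith
  let S : Set ℂ := {w | w.im = s.im} ∩ {w | 1 < w.re} ∩ {w | w.re ≤ 2}
  have hS : Convex ℝ S :=
    ((convex_hyperplane (f := Complex.im) ⟨by intro a b; simp, by intro a b; simp⟩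
      s.im).inter (convex_halfSpace_re_gt 1)).inter (convex_halfSpace_re_le 2)
  have hmv := Convex.norm_image_sub_le_of_norm_hasDerivWithin_le (f := logRatio)
    (f' := logDerivReg) (C := C * T) (s := S) (x := z) (y := s)
    (fun w hw ↦ (hasDerivAt_logRatio hw.1.2).hasDerivWithinAt)
    (fun w hw ↦ by
      have := (hd w hw.1.2.le hw.2).1
      rwa [show w.im = s.im from hw.1.1] at this) hS
    ⟨⟨rfl, by simp [hz]⟩, by simp [hz]⟩ ⟨⟨rfl, h1⟩, h2⟩
  have hdist : ‖s - z‖ ≤ 1 := by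
    have h6 := norm_le_abs_re_add_abs_im (s - z)
    have h7 : |(s - z).re| ≤ 1 := by
      rw [sub_re, hz, abs_le]
      constructor <;> simp <;> linarith
    have h8 : (s - z).im = 0 := by simp [hz]
    rw [h8, abs_zero, add_zero] at h6
    exact h6.trans h7
  have h9 : ‖logRatio s‖ ≤ ‖logRatio z‖ + ‖logRatio s - logRatio z‖ := by
    simpa using norm_add_le (logRatio z) (logRatio s - logRatio z)
  have h10 : C * T * ‖s - z‖ ≤ C * T := mul_le_of_le_one_right (by positivity) hdist
  linarith

end ResonatorProduct

namespace ResonatorProduct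

open Complex Filter Topology MeasureTheory Set

lemma exists_logRatio_eq_near_one :
    ∃ r : ℝ, 0 < r ∧ r ≤ 1 ∧ ∃ G : ℂ → ℂ, DifferentiableOn ℂ G (Metric.ball 1 r) ∧ G 1 = 0 ∧
      ∀ s ∈ Metric.ball (1 : ℂ) r, 1 < s.re → logRatio s = G s := by
  have han : AnalyticAt ℂ logDerivReg 1 :=
    analyticAt_logDerivReg (zetaReg_ne_zero (by simp)) one_ne_zero
  obtain ⟨r₀, hr₀, hball⟩ := Metric.eventually_nhds_iff_ball.mp
    (han.eventually_analyticAt.mono fun z hz ↦ hz.differentiableAt)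
  set r := min r₀ 1 with hr
  have hr0 : 0 < r := lt_min hr₀ one_pos
  have hdiff : DifferentiableOn ℂ logDerivReg (Metric.ball 1 r) := fun z hz ↦
    (hball z (Metric.ball_subset_ball (min_le_left _ _) hz)).differentiableWithinAt
  obtain ⟨G, hG1, hG⟩ := hdiff.isExactOn_ball.with_val_at 1 0
  refine ⟨r, hr0, min_le_right _ _, G,
    fun z hz ↦ (hG z hz).differentiableAt.differentiableWithinAt, hG1, ?_⟩
  set U : Set ℂ := Metric.ball 1 r ∩ {z | 1 < z.re} with hU
  have hUo : IsOpen U := Metric.isOpen_ball.inter (isOpen_lt continuous_const continuous_re)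
  have hUc : IsPreconnected U :=
    ((convex_ball (1 : ℂ) r).inter (convex_halfSpace_re_gt 1)).isPreconnected
  have hd : ∀ z ∈ U, HasDerivAt (fun z ↦ logRatio z - G z) 0 z := fun z hz ↦
    ((hasDerivAt_logRatio hz.2).sub (hG z hz.1)).congr_deriv (by ring)
  obtain ⟨a, ha⟩ := hUo.exists_is_const_of_deriv_eq_zero hUc
    (fun z hz ↦ (hd z hz).differentiableAt.differentiableWithinAt) (fun z hz ↦ (hd z hz).deriv)
  have hev : ∀ᶠ x : ℝ in 𝓝[>] 1, (x : ℂ) ∈ U := by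
    have h1 : ∀ᶠ x : ℝ in 𝓝 1, (x : ℂ) ∈ Metric.ball (1 : ℂ) r :=
      continuous_ofReal.continuousAt.eventually_mem (by
        rw [ofReal_one]; exact Metric.ball_mem_nhds _ hr0)
    filter_upwards [nhdsWithin_le_nhds h1, self_mem_nhdsWithin] with x h1 h2
    exact ⟨h1, by simpa using h2⟩
  have hGc : Tendsto (fun x : ℝ ↦ G x) (𝓝[>] 1) (𝓝 0) := by
    have h1 : ContinuousAt G ((1 : ℝ) : ℂ) := by
      rw [ofReal_one]
      exact (hG 1 (Metric.mem_ball_self hr0)).continuousAt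
    have h2 := (h1.comp continuous_ofReal.continuousAt).tendsto.mono_left
      (nhdsWithin_le_nhds (s := Ioi 1))
    simpa [hG1, Function.comp_def] using h2
  have ha0 : a = 0 := by
    have h1 := tendsto_logRatio.sub hGc
    rw [sub_zero] at h1
    exact tendsto_nhds_unique (tendsto_const_nhds.congr' (hev.mono fun x hx ↦ (ha x hx).symm)) h1
  intro s hs hs1
  have := ha s ⟨hs, hs1⟩
  rwa [ha0, sub_eq_zero] at this

/-- The integrand of the Perron formula for the error term. -/
noncomputable def kernelRatio (s : ℂ) : ℂ := logRatio (1 + s) * (s * (s + 1))⁻¹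

lemma hasDerivAt_kernelRatio {s : ℂ} (hs : 0 < s.re) :
    HasDerivAt kernelRatio (logDerivReg (1 + s) * (s * (s + 1))⁻¹ -
      logRatio (1 + s) * ((2 * s + 1) * (s * (s + 1))⁻¹ ^ 2)) s := by
  have h0 : s ≠ 0 := by rintro rfl; simp at hs
  have h1 : s + 1 ≠ 0 := fun h ↦ by
    have := congrArg re h; simp at this; linarith
  have hE : HasDerivAt (fun s ↦ logRatio (1 + s)) (logDerivReg (1 + s)) s :=
    HasDerivAt.comp_const_add 1 s (hasDerivAt_logRatio (by simpa using hs))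
  have hQ := ((hasDerivAt_id s).fun_mul ((hasDerivAt_id s).add_const 1)).fun_inv
    (mul_ne_zero h0 h1)
  refine (hE.fun_mul hQ).congr_deriv ?_
  simp only [id]
  field_simp
  ring

lemma hasDerivAt_deriv_kernelRatio {s : ℂ} (hs : 0 < s.re) :
    HasDerivAt (deriv kernelRatio) (deriv logDerivReg (1 + s) * (s * (s + 1))⁻¹ -
      2 * (logDerivReg (1 + s) * ((2 * s + 1) * (s * (s + 1))⁻¹ ^ 2)) +
      logRatio (1 + s) * (2 * (2 * s + 1) ^ 2 * (s * (s + 1))⁻¹ ^ 3 -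
        2 * (s * (s + 1))⁻¹ ^ 2)) s := by
  have h0 : s ≠ 0 := by rintro rfl; simp at hs
  have h1 : s + 1 ≠ 0 := fun h ↦ by
    have := congrArg re h; simp at this; linarith
  have h2 : 1 + s ≠ 0 := by rwa [add_comm]
  have hev : deriv kernelRatio =ᶠ[𝓝 s] fun s ↦ logDerivReg (1 + s) * (s * (s + 1))⁻¹ -
      logRatio (1 + s) * ((2 * s + 1) * (s * (s + 1))⁻¹ ^ 2) := by
    filter_upwards [(isOpen_lt continuous_const continuous_re).mem_nhds hs] with z hz
    exact (hasDerivAt_kernelRatio hz).deriv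
  refine HasDerivAt.congr_of_eventuallyEq ?_ hev
  have hE : HasDerivAt (fun s ↦ logRatio (1 + s)) (logDerivReg (1 + s)) s :=
    HasDerivAt.comp_const_add 1 s (hasDerivAt_logRatio (by simpa using hs))
  have hE' : HasDerivAt (fun s ↦ logDerivReg (1 + s)) (deriv logDerivReg (1 + s)) s :=
    HasDerivAt.comp_const_add 1 s (analyticAt_logDerivReg
      (zetaReg_ne_zero (by simpa using hs.le)) h2).differentiableAt.hasDerivAt
  have hQ := ((hasDerivAt_id s).fun_mul ((hasDerivAt_id s).add_const 1)).fun_inv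
    (mul_ne_zero h0 h1)
  have hP := (((hasDerivAt_id s).const_mul 2).add_const 1).fun_mul (hQ.fun_pow 2)
  refine ((hE'.fun_mul hQ).fun_sub (hE.fun_mul hP)).congr_deriv ?_
  simp only [id, Nat.reduceSub, pow_one, Nat.cast_ofNat]
  field_simp
  ring

lemma exists_norm_kernelRatio_le :
    ∃ C : ℝ, 0 < C ∧ ∀ s : ℂ, 0 < s.re → s.re ≤ 1 →
      ‖kernelRatio s‖ ≤ C * (1 + |s.im|) ^ (-(3 / 2) : ℝ) ∧
      ‖deriv kernelRatio s‖ ≤ C * (1 + |s.im|) ^ (-(3 / 2) : ℝ) ∧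
      ‖deriv (deriv kernelRatio) s‖ ≤ C * (1 + |s.im|) ^ (-(3 / 2) : ℝ) := by
  obtain ⟨r, hr0, hr1, G, hG, hG1, hGeq⟩ := exists_logRatio_eq_near_one
  obtain ⟨C₁, hC₁, hD⟩ := exists_norm_logRatio_le
  obtain ⟨C₂, hC₂, hD'⟩ := exists_norm_logDerivReg_le
  have hnear : ∃ K : ℝ, ∀ s : ℂ, 0 < s.re → ‖s‖ ≤ r / 2 → ‖kernelRatio s‖ ≤ K ∧
      ‖deriv kernelRatio s‖ ≤ K ∧ ‖deriv (deriv kernelRatio) s‖ ≤ K := by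
    set H : ℂ → ℂ := fun s ↦ dslope G 1 (1 + s) * (s + 1)⁻¹ with hH
    have hmap : ∀ s ∈ Metric.ball (0 : ℂ) r, 1 + s ∈ Metric.ball (1 : ℂ) r := fun s hs ↦ by
      simpa [dist_eq_norm] using hs
    have hHd : DifferentiableOn ℂ H (Metric.ball 0 r) := by
      have h1 : DifferentiableOn ℂ (dslope G 1) (Metric.ball 1 r) :=
        (differentiableOn_dslope (Metric.ball_mem_nhds _ hr0)).mpr hG
      refine (h1.comp (by fun_prop) hmap).mul (DifferentiableOn.inv (by fun_prop) fun s hs h ↦ ?_)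
      have h2 : s = -1 := eq_neg_of_add_eq_zero_left h
      rw [h2] at hs
      simp at hs
      linarith
    have hHa : AnalyticOnNhd ℂ H (Metric.ball 0 r) := hHd.analyticOnNhd Metric.isOpen_ball
    have hev : ∀ s ∈ Metric.ball (0 : ℂ) r ∩ {z | 0 < z.re}, kernelRatio s = H s := by
      rintro s ⟨hs, hs0⟩
      have h0 : s ≠ 0 := by rintro rfl; simp at hs0
      have h1 : (1 : ℂ) + s ≠ 1 := by simpa using h0
      simp only [hH, kernelRatio]
      rw [dslope_of_ne _ h1, slope_def_field, hG1, hGeq _ (hmap s hs) (by simpa using hs0)]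
      rw [mul_inv]
      simp
      ring
    have hopen : IsOpen (Metric.ball (0 : ℂ) r ∩ {z | 0 < z.re}) :=
      Metric.isOpen_ball.inter (isOpen_lt continuous_const continuous_re)
    have hsub : Metric.closedBall (0 : ℂ) (r / 2) ⊆ Metric.ball 0 r :=
      Metric.closedBall_subset_ball (by linarith)
    have hcpt := isCompact_closedBall (0 : ℂ) (r / 2)
    obtain ⟨K₀, hK₀⟩ := hcpt.exists_bound_of_continuousOn (hHa.continuousOn.mono hsub)
    obtain ⟨K₁, hK₁⟩ := hcpt.exists_bound_of_continuousOn (hHa.deriv.continuousOn.mono hsub)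
    obtain ⟨K₂, hK₂⟩ := hcpt.exists_bound_of_continuousOn (hHa.deriv.deriv.continuousOn.mono hsub)
    refine ⟨max K₀ (max K₁ K₂), fun s hs hsr ↦ ?_⟩
    have hsc : s ∈ Metric.closedBall (0 : ℂ) (r / 2) := by simpa using hsr
    have hmem : s ∈ Metric.ball (0 : ℂ) r ∩ {z | 0 < z.re} := ⟨hsub hsc, hs⟩
    have he : kernelRatio =ᶠ[𝓝 s] H := by
      filter_upwards [hopen.mem_nhds hmem] with z hz using hev z hz
    rw [he.eq_of_nhds, he.deriv_eq, he.deriv.deriv_eq]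
    exact ⟨(hK₀ s hsc).trans (by simp), (hK₁ s hsc).trans (by simp), (hK₂ s hsc).trans (by simp)⟩
  obtain ⟨K, hK⟩ := hnear
  have hQb : ∃ B : ℝ, 0 < B ∧ ∀ s : ℂ, 0 < s.re → r / 2 ≤ ‖s‖ →
      ‖(s * (s + 1))⁻¹‖ ≤ B * (1 + |s.im|) ^ (-2 : ℝ) := by
    refine ⟨(1 + 2 / r) ^ 2, by positivity, fun s hs hsr ↦ ?_⟩
    have ht := abs_nonneg s.im
    have h1 : 1 + |s.im| ≤ (1 + 2 / r) * ‖s‖ := by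
      have h2 : 1 ≤ 2 / r * ‖s‖ := by
        rw [div_mul_eq_mul_div, le_div_iff₀ hr0]; linarith
      linarith [abs_im_le_norm s]
    have h2 : ‖s‖ ≤ ‖s + 1‖ := by
      rw [norm_def, norm_def]
      apply Real.sqrt_le_sqrt
      simp only [normSq_apply, add_re, add_im, one_re, one_im]
      nlinarith
    have hs0 : 0 < ‖s‖ := by linarith
    have hs1 : 0 < ‖s + 1‖ := by linarith
    rw [norm_inv, norm_mul, Real.rpow_neg (by positivity), ← div_eq_mul_inv,
      le_div_iff₀ (by positivity), inv_mul_le_iff₀ (by positivity), Real.rpow_two]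
    calc (1 + |s.im|) ^ 2 ≤ ((1 + 2 / r) * ‖s‖) ^ 2 := by gcongr
      _ = ‖s‖ * ‖s‖ * (1 + 2 / r) ^ 2 := by ring
      _ ≤ _ := by gcongr
  obtain ⟨B, hB, hQ⟩ := hQb
  set Z := C₁ + C₂ with hZ
  have hZ0 : 0 < Z := by positivity
  set W := Z * (B + 6 * B ^ 2 + 18 * B ^ 3 + 2 * B ^ 2) with hW
  have hW0 : 0 < W := by positivity
  refine ⟨|K| * 3 + W, by positivity, fun s hs hs1 ↦ ?_⟩
  have ht := abs_nonneg s.im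
  rcases le_total ‖s‖ (r / 2) with h | h
  · have hT : (1 / 3 : ℝ) ≤ (1 + |s.im|) ^ (-(3 / 2) : ℝ) := by
      have h1 : 1 + |s.im| ≤ 3 / 2 := by linarith [abs_im_le_norm s]
      calc (1 / 3 : ℝ) ≤ (3 / 2) ^ (-2 : ℝ) := by
            rw [Real.rpow_neg (by norm_num), Real.rpow_two]; norm_num
        _ ≤ (3 / 2) ^ (-(3 / 2) : ℝ) :=
          Real.rpow_le_rpow_of_exponent_le (by norm_num) (by norm_num)
        _ ≤ _ := Real.rpow_le_rpow_of_nonpos (by positivity) h1 (by norm_num)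
    have hb : K ≤ (|K| * 3 + W) * (1 + |s.im|) ^ (-(3 / 2) : ℝ) := by
      refine (le_abs_self K).trans ?_
      nlinarith [abs_nonneg K, mul_nonneg hW0.le (by linarith : 0 ≤ (1 + |s.im|) ^ (-(3 / 2) : ℝ))]
    obtain ⟨h1, h2, h3⟩ := hK s hs h
    exact ⟨h1.trans hb, h2.trans hb, h3.trans hb⟩
  · set T := 1 + |s.im| with hT
    have hT1 : 1 ≤ T := by linarith
    have hq := hQ s hs h
    set Q := (s * (s + 1))⁻¹ with hQdef
    have e0 : ‖logRatio (1 + s)‖ ≤ Z * T ^ (1 / 2 : ℝ) := by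
      have := hD (1 + s) (by simpa using hs) (by simp; linarith)
      simp only [add_im, one_im, zero_add] at this
      exact this.trans (by gcongr; linarith)
    have e12 := hD' (1 + s) (by simpa using hs.le) (by simp; linarith)
    simp only [add_im, one_im, zero_add] at e12
    have e1 : ‖logDerivReg (1 + s)‖ ≤ Z * T ^ (1 / 2 : ℝ) :=
      e12.1.trans (by gcongr; linarith)
    have e2 : ‖deriv logDerivReg (1 + s)‖ ≤ Z * T ^ (1 / 2 : ℝ) :=
      e12.2.trans (by gcongr; linarith)
    have hl : ‖2 * s + 1‖ ≤ 3 * T := by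
      have h3 : (2 * s + 1).re = 2 * s.re + 1 := by simp
      have h4 : (2 * s + 1).im = 2 * s.im := by simp
      refine (norm_le_abs_re_add_abs_im _).trans ?_
      rw [h3, h4, abs_of_pos (by linarith), abs_mul, abs_two]
      linarith
    have hT2 : T ^ (-2 : ℝ) = (T ^ 2)⁻¹ := by rw [Real.rpow_neg (by linarith), Real.rpow_two]
    rw [hT2] at hq
    have hTi : T * (T ^ 2)⁻¹ ≤ 1 := by
      rw [← div_eq_mul_inv, div_le_one (by positivity)]; nlinarith
    have hTi0 : 0 < (T ^ 2)⁻¹ := by positivity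
    have hTi1 : (T ^ 2)⁻¹ ≤ 1 := inv_le_one_of_one_le₀ (by nlinarith)
    set y := (T ^ 2)⁻¹ with hy
    have q1 : ‖(2 * s + 1) * Q ^ 2‖ ≤ 3 * B ^ 2 * y := by
      rw [norm_mul, norm_pow]
      calc ‖2 * s + 1‖ * ‖Q‖ ^ 2 ≤ 3 * T * (B * y) ^ 2 := by gcongr
        _ = 3 * B ^ 2 * y * (T * y) := by ring
        _ ≤ 3 * B ^ 2 * y := mul_le_of_le_one_right (by positivity) hTi
    have q2 : ‖2 * (2 * s + 1) ^ 2 * Q ^ 3 - 2 * Q ^ 2‖ ≤ (18 * B ^ 3 + 2 * B ^ 2) * y := by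
      refine (norm_sub_le _ _).trans ?_
      simp only [norm_mul, norm_pow, norm_ofNat]
      calc 2 * ‖2 * s + 1‖ ^ 2 * ‖Q‖ ^ 3 + 2 * ‖Q‖ ^ 2
          ≤ 2 * (3 * T) ^ 2 * (B * y) ^ 3 + 2 * (B * y) ^ 2 := by gcongr
        _ = 18 * B ^ 3 * y * (T * y) ^ 2 + 2 * B ^ 2 * y * y := by ring
        _ ≤ 18 * B ^ 3 * y * 1 ^ 2 + 2 * B ^ 2 * y * 1 := by gcongr
        _ = _ := by ring
    have hfin : T ^ (1 / 2 : ℝ) * y = T ^ (-(3 / 2) : ℝ) := by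
      rw [← hT2, ← Real.rpow_add (by linarith)]; norm_num
    have hcmp : ∀ w : ℝ, w ≤ W → w * (T ^ (1 / 2 : ℝ) * y) ≤
        (|K| * 3 + W) * T ^ (-(3 / 2) : ℝ) := fun w hw ↦ by
      rw [hfin]
      gcongr
      linarith [abs_nonneg K]
    have hpos : 0 < T ^ (1 / 2 : ℝ) := by positivity
    refine ⟨?_, ?_, ?_⟩
    · rw [kernelRatio, norm_mul]
      calc ‖logRatio (1 + s)‖ * ‖Q‖ ≤ Z * T ^ (1 / 2 : ℝ) * (B * y) := by gcongr
        _ = Z * B * (T ^ (1 / 2 : ℝ) * y) := by ring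
        _ ≤ _ := hcmp _ (by
          rw [hW]
          refine mul_le_mul_of_nonneg_left ?_ hZ0.le
          linarith [pow_pos hB 2, pow_pos hB 3])
    · rw [(hasDerivAt_kernelRatio hs).deriv]
      refine (norm_sub_le _ _).trans ?_
      rw [norm_mul, norm_mul (logRatio _)]
      calc ‖logDerivReg (1 + s)‖ * ‖Q‖ + ‖logRatio (1 + s)‖ * ‖(2 * s + 1) * Q ^ 2‖
          ≤ Z * T ^ (1 / 2 : ℝ) * (B * y) + Z * T ^ (1 / 2 : ℝ) * (3 * B ^ 2 * y) := by gcongr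
        _ = Z * (B + 3 * B ^ 2) * (T ^ (1 / 2 : ℝ) * y) := by ring
        _ ≤ _ := hcmp _ (by
          rw [hW]
          refine mul_le_mul_of_nonneg_left ?_ hZ0.le
          linarith [pow_pos hB 2, pow_pos hB 3])
    · rw [(hasDerivAt_deriv_kernelRatio hs).deriv]
      refine (norm_add_le _ _).trans ((add_le_add_left (norm_sub_le _ _) _).trans ?_)
      rw [norm_mul, norm_mul 2, norm_mul (logDerivReg _), norm_mul (logRatio _), norm_ofNat]
      calc ‖deriv logDerivReg (1 + s)‖ * ‖Q‖ +
            2 * (‖logDerivReg (1 + s)‖ * ‖(2 * s + 1) * Q ^ 2‖) +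
            ‖logRatio (1 + s)‖ * ‖2 * (2 * s + 1) ^ 2 * Q ^ 3 - 2 * Q ^ 2‖
          ≤ Z * T ^ (1 / 2 : ℝ) * (B * y) + 2 * (Z * T ^ (1 / 2 : ℝ) * (3 * B ^ 2 * y)) +
            Z * T ^ (1 / 2 : ℝ) * ((18 * B ^ 3 + 2 * B ^ 2) * y) := by gcongr
        _ = W * (T ^ (1 / 2 : ℝ) * y) := by rw [hW]; ring
        _ ≤ _ := hcmp _ le_rfl

end ResonatorProduct

namespace ResonatorProduct

open Complex Filter Topology MeasureTheory Set
open scoped FourierTransform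

/-- The smoothing kernel `(1 - e⁻ˣ)₊`. -/
noncomputable def hinge (x : ℝ) : ℝ := max 0 (1 - Real.exp (-x))

lemma continuous_hinge : Continuous hinge := by unfold hinge; fun_prop

lemma hinge_of_nonpos {x : ℝ} (hx : x ≤ 0) : hinge x = 0 :=
  max_eq_left (by linarith [Real.one_le_exp (by linarith : 0 ≤ -x)])

lemma hinge_of_nonneg {x : ℝ} (hx : 0 ≤ x) : hinge x = 1 - Real.exp (-x) :=
  max_eq_right (by linarith [Real.exp_le_one_iff.mpr (by linarith : -x ≤ 0)])

/-- A parametrisation of the vertical line `re s = ε`. -/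
noncomputable def vline (ε w : ℝ) : ℂ := ε + (2 * Real.pi * w : ℝ) * I

@[simp] lemma vline_re (ε w : ℝ) : (vline ε w).re = ε := by simp [vline]

@[simp] lemma vline_im (ε w : ℝ) : (vline ε w).im = 2 * Real.pi * w := by simp [vline]

lemma continuous_vline (ε : ℝ) : Continuous (vline ε) := by unfold vline; fun_prop

lemma vline_mul_vline_add_one_ne_zero {ε : ℝ} (hε : 0 < ε) (w : ℝ) :
    vline ε w * (vline ε w + 1) ≠ 0 := by
  refine mul_ne_zero (fun h ↦ ?_) (fun h ↦ ?_)
  · have := congrArg re h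
    simp at this
    linarith
  · have := congrArg re h
    simp at this
    linarith

lemma hinge_mul_exp_eq_indicator (ε : ℝ) (x : ℝ) :
    ((hinge x * Real.exp (-(ε * x)) : ℝ) : ℂ) = (Ioi (0 : ℝ)).indicator
      (fun x : ℝ ↦ cexp (-ε * x) - cexp (-(ε + 1) * x)) x := by
  by_cases hx : 0 < x
  · rw [indicator_of_mem (mem_Ioi.mpr hx), hinge_of_nonneg hx.le]
    push_cast
    rw [sub_mul, one_mul, ← Complex.exp_add]
    ring_nf
  · rw [indicator_of_notMem (by simpa using hx), hinge_of_nonpos (not_lt.mp hx)]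
    simp

lemma integrable_hinge_mul_exp {ε : ℝ} (hε : 0 < ε) :
    Integrable fun x : ℝ ↦ ((hinge x * Real.exp (-(ε * x)) : ℝ) : ℂ) := by
  simp only [hinge_mul_exp_eq_indicator]
  rw [integrable_indicator_iff measurableSet_Ioi]
  exact (integrableOn_exp_mul_complex_Ioi (by simpa using hε) 0).sub
    (integrableOn_exp_mul_complex_Ioi (by simp; linarith) 0)

lemma fourier_hinge_mul_exp {ε : ℝ} (hε : 0 < ε) (w : ℝ) :
    𝓕 (fun x : ℝ ↦ ((hinge x * Real.exp (-(ε * x)) : ℝ) : ℂ)) w =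
      (vline ε w * (vline ε w + 1))⁻¹ := by
  rw [Real.fourier_real_eq_integral_exp_smul]
  have h : ∀ x : ℝ, cexp ((-2 * Real.pi * x * w : ℝ) * I) •
      ((hinge x * Real.exp (-(ε * x)) : ℝ) : ℂ) = (Ioi (0 : ℝ)).indicator
      (fun x : ℝ ↦ cexp (-vline ε w * x) - cexp (-(vline ε w + 1) * x)) x := fun x ↦ by
    rw [hinge_mul_exp_eq_indicator, smul_eq_mul]
    by_cases hx : x ∈ Ioi (0 : ℝ)
    · rw [indicator_of_mem hx, indicator_of_mem hx, mul_sub, ← Complex.exp_add, ← Complex.exp_add,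
        vline]
      push_cast
      ring_nf
    · rw [indicator_of_notMem hx, indicator_of_notMem hx, mul_zero]
  have h1 : (-vline ε w).re < 0 := by simpa using hε
  have h2 : (-(vline ε w + 1)).re < 0 := by simp; linarith
  have h0 := vline_mul_vline_add_one_ne_zero hε w
  have ha := left_ne_zero_of_mul h0
  have hb := right_ne_zero_of_mul h0
  simp only [h]
  rw [integral_indicator measurableSet_Ioi, integral_sub (integrableOn_exp_mul_complex_Ioi h1 0)
    (integrableOn_exp_mul_complex_Ioi h2 0), integral_exp_mul_complex_Ioi h1,
    integral_exp_mul_complex_Ioi h2]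
  simp only [ofReal_zero, mul_zero, Complex.exp_zero]
  rw [neg_div_neg_eq, neg_div_neg_eq]
  field_simp
  ring

lemma norm_inv_vline_le {ε : ℝ} (hε : 0 < ε) (w : ℝ) :
    ‖(vline ε w * (vline ε w + 1))⁻¹‖ ≤ (1 + 1 / ε) ^ 2 * (1 + ‖w‖) ^ (-2 : ℝ) := by
  have h0 := vline_mul_vline_add_one_ne_zero hε w
  have ha := norm_pos_iff.mpr (left_ne_zero_of_mul h0)
  have hb := norm_pos_iff.mpr (right_ne_zero_of_mul h0)
  have hw : ‖w‖ ≤ |2 * Real.pi * w| := by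
    rw [abs_mul, Real.norm_eq_abs, abs_of_pos (by positivity : 0 < 2 * Real.pi)]
    exact le_mul_of_one_le_left (abs_nonneg w) (by linarith [Real.pi_gt_three])
  have h1 : 1 + ‖w‖ ≤ (1 + 1 / ε) * ‖vline ε w‖ := by
    have e1 : ‖w‖ ≤ ‖vline ε w‖ := hw.trans (by simpa using abs_im_le_norm (vline ε w))
    have e2 : ε ≤ ‖vline ε w‖ := by
      simpa [abs_of_pos hε] using abs_re_le_norm (vline ε w)
    have e3 : 1 ≤ 1 / ε * ‖vline ε w‖ := by
      rw [div_mul_eq_mul_div, le_div_iff₀ hε]; linarith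
    linarith
  have h2 : ‖vline ε w‖ ≤ ‖vline ε w + 1‖ := by
    rw [norm_def, norm_def]
    apply Real.sqrt_le_sqrt
    simp only [normSq_apply, add_re, add_im, one_re, one_im, vline_re]
    nlinarith
  rw [norm_inv, norm_mul, Real.rpow_neg (by positivity), ← div_eq_mul_inv,
    le_div_iff₀ (by positivity), inv_mul_le_iff₀ (by positivity), Real.rpow_two]
  calc (1 + ‖w‖) ^ 2 ≤ ((1 + 1 / ε) * ‖vline ε w‖) ^ 2 := by gcongr
    _ = ‖vline ε w‖ * ‖vline ε w‖ * (1 + 1 / ε) ^ 2 := by ring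
    _ ≤ _ := by gcongr

lemma continuous_inv_vline {ε : ℝ} (hε : 0 < ε) :
    Continuous fun w ↦ (vline ε w * (vline ε w + 1))⁻¹ :=
  ((continuous_vline ε).mul ((continuous_vline ε).add continuous_const)).inv₀
    (vline_mul_vline_add_one_ne_zero hε)

lemma integrable_inv_vline {ε : ℝ} (hε : 0 < ε) :
    Integrable fun w ↦ (vline ε w * (vline ε w + 1))⁻¹ := by
  have h := (integrable_one_add_norm (E := ℝ) (μ := volume) (r := 2) (by simp)).const_mul
    ((1 + 1 / ε) ^ 2)
  exact h.mono' (continuous_inv_vline hε).aestronglyMeasurable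
    (Eventually.of_forall fun w ↦ norm_inv_vline_le hε w)

/-- The Perron formula for the kernel `hinge`. -/
lemma integral_exp_mul_inv_vline {ε : ℝ} (hε : 0 < ε) (x : ℝ) :
    ∫ w : ℝ, cexp ((2 * Real.pi * w * x : ℝ) * I) * (vline ε w * (vline ε w + 1))⁻¹ =
      ((hinge x * Real.exp (-(ε * x)) : ℝ) : ℂ) := by
  have hF : 𝓕 (fun x : ℝ ↦ ((hinge x * Real.exp (-(ε * x)) : ℝ) : ℂ)) =
      fun w ↦ (vline ε w * (vline ε w + 1))⁻¹ := funext fun w ↦ fourier_hinge_mul_exp hε w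
  have h := Continuous.fourierInv_fourier_eq
    (f := fun x : ℝ ↦ ((hinge x * Real.exp (-(ε * x)) : ℝ) : ℂ))
    (by have := continuous_hinge; fun_prop) (integrable_hinge_mul_exp hε)
    (by rw [hF]; exact integrable_inv_vline hε)
  rw [hF] at h
  rw [← congrFun h x, Real.fourierInv_eq']
  refine integral_congr_ae (Eventually.of_forall fun w ↦ ?_)
  simp only [smul_eq_mul, RCLike.inner_apply, conj_trivial]
  congr 3
  push_cast
  ring

/-- The Perron formula, integrated against a weight `W` located at `v`. -/
lemma integral_weight_mul_hinge {Ω : Type*} [MeasurableSpace Ω] (μ : Measure Ω) [SFinite μ]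
    {W v : Ω → ℝ} (hv : Measurable v) {ε : ℝ} (hε : 0 < ε)
    (hW : Integrable (fun ω ↦ W ω * Real.exp (-(ε * v ω))) μ) (L : ℝ) :
    Integrable (fun w : ℝ ↦ cexp ((2 * Real.pi * w * L : ℝ) * I) *
        ((vline ε w * (vline ε w + 1))⁻¹ * ∫ ω, W ω * cexp (-(vline ε w * v ω)) ∂μ)) ∧
      ∫ w : ℝ, cexp ((2 * Real.pi * w * L : ℝ) * I) *
        ((vline ε w * (vline ε w + 1))⁻¹ * ∫ ω, W ω * cexp (-(vline ε w * v ω)) ∂μ) =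
      ((Real.exp (-(ε * L)) * ∫ ω, W ω * hinge (L - v ω) ∂μ : ℝ) : ℂ) := by
  set F : Ω → ℝ → ℂ := fun ω w ↦ cexp ((2 * Real.pi * w * L : ℝ) * I) *
    ((vline ε w * (vline ε w + 1))⁻¹ * (W ω * cexp (-(vline ε w * v ω)))) with hF
  have hFeq : ∀ ω w, F ω w = cexp ((2 * Real.pi * w * (L - v ω) : ℝ) * I) *
      (((W ω * Real.exp (-(ε * v ω)) : ℝ) : ℂ) * (vline ε w * (vline ε w + 1))⁻¹) := by
    intro ω w
    have h : cexp ((2 * Real.pi * w * L : ℝ) * I) * cexp (-(vline ε w * v ω)) =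
        cexp ((2 * Real.pi * w * (L - v ω) : ℝ) * I) * cexp (-(ε * v ω)) := by
      rw [← Complex.exp_add, ← Complex.exp_add, vline]
      push_cast
      ring_nf
    simp only [hF]
    push_cast at h ⊢
    linear_combination ((vline ε w * (vline ε w + 1))⁻¹ * W ω) * h
  have hFint : Integrable (Function.uncurry F) (μ.prod volume) := by
    have h1 : Integrable (fun z : Ω × ℝ ↦ ((W z.1 * Real.exp (-(ε * v z.1)) : ℝ) : ℂ) *
        (vline ε z.2 * (vline ε z.2 + 1))⁻¹) (μ.prod volume) :=
      hW.ofReal.mul_prod (integrable_inv_vline hε)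
    have h2 := h1.bdd_mul (c := 1)
      (f := fun z : Ω × ℝ ↦ cexp ((2 * Real.pi * z.2 * (L - v z.1) : ℝ) * I))
      (by
        refine Measurable.aestronglyMeasurable ?_
        fun_prop) (Eventually.of_forall fun z ↦ by rw [norm_exp_ofReal_mul_I])
    exact h2.congr (Eventually.of_forall fun z ↦ (hFeq z.1 z.2).symm)
  have hinner : ∀ w, ∫ ω, F ω w ∂μ = cexp ((2 * Real.pi * w * L : ℝ) * I) *
      ((vline ε w * (vline ε w + 1))⁻¹ * ∫ ω, W ω * cexp (-(vline ε w * v ω)) ∂μ) := fun w ↦ by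
    simp only [hF]
    rw [integral_const_mul, integral_const_mul]
  constructor
  · exact hFint.integral_prod_right.congr (Eventually.of_forall hinner)
  · simp only [← hinner]
    rw [← integral_integral_swap hFint]
    have h3 : ∀ ω, ∫ w, F ω w = ((Real.exp (-(ε * L)) * (W ω * hinge (L - v ω)) : ℝ) : ℂ) := by
      intro ω
      calc ∫ w, F ω w = ∫ w : ℝ, ((W ω * Real.exp (-(ε * v ω)) : ℝ) : ℂ) *
            (cexp ((2 * Real.pi * w * (L - v ω) : ℝ) * I) *
              (vline ε w * (vline ε w + 1))⁻¹) := by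
            refine integral_congr_ae (Eventually.of_forall fun w ↦ ?_)
            simp only [hFeq]
            ring
        _ = _ := by
            rw [integral_const_mul, integral_exp_mul_inv_vline hε, ← ofReal_mul]
            congr 1
            have : Real.exp (-(ε * L)) = Real.exp (-(ε * v ω)) * Real.exp (-(ε * (L - v ω))) := by
              rw [← Real.exp_add]; ring_nf
            rw [this]
            ring
    simp only [h3]
    rw [← integral_const_mul]
    exact integral_ofReal

/-- The Laplace transform of `(1 - e⁻ᵛ) / v`. -/
lemma integral_one_sub_exp_div_mul_exp {s : ℂ} (hs : 0 < s.re) :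
    ∫ v in Ioi (0 : ℝ), (((1 - Real.exp (-v)) / v : ℝ) : ℂ) * cexp (-(s * v)) =
      log (1 + s) - log s := by
  set F : ℝ → ℝ → ℂ := fun v y ↦ cexp (-(s + y) * v) with hF
  have hFint : Integrable (Function.uncurry F)
      ((volume.restrict (Ioi (0 : ℝ))).prod (volume.restrict (Ioc (0 : ℝ) 1))) := by
    have h1 : Integrable (fun z : ℝ × ℝ ↦ Real.exp (-s.re * z.1) * (1 : ℝ))
        ((volume.restrict (Ioi (0 : ℝ))).prod (volume.restrict (Ioc (0 : ℝ) 1))) := by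
      refine Integrable.mul_prod (f := fun v ↦ Real.exp (-s.re * v)) (g := fun _ ↦ (1 : ℝ)) ?_ ?_
      · exact integrableOn_exp_mul_Ioi (by linarith) 0
      · exact integrable_const _
    refine h1.mono' (Continuous.aestronglyMeasurable (by
      simp only [hF, Function.uncurry_def]; fun_prop)) ?_
    rw [Measure.prod_restrict]
    refine (ae_restrict_iff' (measurableSet_Ioi.prod measurableSet_Ioc)).mpr
      (Eventually.of_forall fun z hz ↦ ?_)
    have hz1 : 0 < z.1 := hz.1
    have hz2 : 0 < z.2 := hz.2.1
    simp only [Function.uncurry_def, hF, Complex.norm_exp, mul_one]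
    apply Real.exp_le_exp.mpr
    simp
    nlinarith [mul_pos hz1 hz2]
  have hswap := integral_integral_swap hFint
  have hL : ∫ v in Ioi (0 : ℝ), ∫ y in Ioc (0 : ℝ) 1, F v y =
      ∫ v in Ioi (0 : ℝ), (((1 - Real.exp (-v)) / v : ℝ) : ℂ) * cexp (-(s * v)) := by
    refine setIntegral_congr_fun measurableSet_Ioi fun v hv ↦ ?_
    have hv0 : (v : ℂ) ≠ 0 := by exact_mod_cast (mem_Ioi.mp hv).ne'
    change ∫ y in Ioc (0 : ℝ) 1, F v y = _
    rw [← intervalIntegral.integral_of_le zero_le_one]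
    have hd : ∀ y ∈ uIcc (0 : ℝ) 1, HasDerivAt (fun y : ℝ ↦ -cexp (-(s + y) * v) / v) (F v y) y := by
      intro y _
      have h1 : HasDerivAt (fun y : ℝ ↦ -(s + (y : ℂ)) * v) (-(1 : ℂ) * v) y :=
        ((ofRealCLM.hasDerivAt.const_add s).neg.mul_const (v : ℂ))
      refine (h1.cexp.neg.div_const (v : ℂ)).congr_deriv ?_
      simp only [hF]
      field_simp
    rw [intervalIntegral.integral_eq_sub_of_hasDerivAt hd
      (Continuous.intervalIntegrable (by simp only [hF]; fun_prop) _ _)]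
    have h2 : cexp (-(s + 1) * v) = cexp (-v) * cexp (-(s * v)) := by
      rw [← Complex.exp_add]; ring_nf
    push_cast
    rw [h2, add_zero, neg_mul]
    field_simp
    ring
  have hR : ∫ y in Ioc (0 : ℝ) 1, ∫ v in Ioi (0 : ℝ), F v y = log (1 + s) - log s := by
    have h1 : ∀ y ∈ Ioc (0 : ℝ) 1, ∫ v in Ioi (0 : ℝ), F v y = (s + y)⁻¹ := fun y hy ↦ by
      have hre : (-(s + y)).re < 0 := by simp; linarith [hy.1]
      simp only [hF]
      rw [integral_exp_mul_complex_Ioi hre]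
      simp [neg_div_neg_eq, -neg_add_rev]
    rw [setIntegral_congr_fun measurableSet_Ioc h1, ← intervalIntegral.integral_of_le zero_le_one]
    have hpos : ∀ y ∈ uIcc (0 : ℝ) 1, 0 < (s + y).re := fun y hy ↦ by
      rw [uIcc_of_le zero_le_one] at hy
      simp
      linarith [hy.1]
    have hd : ∀ y ∈ uIcc (0 : ℝ) 1, HasDerivAt (fun y : ℝ ↦ log (s + y)) ((s + y)⁻¹) y := by
      intro y hy
      have h2 : HasDerivAt (fun y : ℝ ↦ s + (y : ℂ)) 1 y := ofRealCLM.hasDerivAt.const_add s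
      refine (h2.clog_real (Or.inl (hpos y hy))).congr_deriv ?_
      rw [one_div]
    rw [intervalIntegral.integral_eq_sub_of_hasDerivAt hd]
    · simp [add_comm]
    · refine ContinuousOn.intervalIntegrable ?_
      refine ContinuousOn.inv₀ (by fun_prop) fun y hy h ↦ ?_
      have := hpos y hy
      rw [h] at this
      simp at this
  rw [← hL, hswap, hR]

end ResonatorProduct

namespace ResonatorProduct

open Complex Filter Topology MeasureTheory Set
open scoped FourierTransform

lemma norm_fourier_le_integral_norm (f : ℝ → ℂ) (x : ℝ) : ‖𝓕 f x‖ ≤ ∫ w, ‖f w‖ :=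
  VectorFourier.norm_fourierIntegral_le_integral_norm _ _ _ _ _

lemma norm_fourier_mul_sq_le {φ : ℝ → ℂ} (h0 : Integrable φ) (hd0 : Differentiable ℝ φ)
    (h1 : Integrable (deriv φ)) (hd1 : Differentiable ℝ (deriv φ))
    (h2 : Integrable (deriv (deriv φ))) (x : ℝ) :
    (2 * Real.pi * x) ^ 2 * ‖𝓕 φ x‖ ≤ ∫ w, ‖deriv (deriv φ) w‖ := by
  refine le_trans (le_of_eq ?_) (norm_fourier_le_integral_norm (deriv (deriv φ)) x)
  rw [Real.fourier_deriv h1 hd1 h2, Real.fourier_deriv h0 hd0 h1]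
  simp only [norm_smul, norm_mul, norm_ofNat, norm_real, norm_I, mul_one, Real.norm_eq_abs,
    abs_of_pos Real.pi_pos]
  rw [mul_pow, ← sq_abs x]
  ring

lemma hasDerivAt_vline (ε w : ℝ) : HasDerivAt (vline ε) (2 * Real.pi * I) w := by
  have h : HasDerivAt (fun w : ℝ ↦ (ε : ℂ) + 2 * Real.pi * I * (w : ℂ)) (2 * Real.pi * I * 1) w :=
    (ofRealCLM.hasDerivAt.const_mul (2 * Real.pi * I : ℂ)).const_add (ε : ℂ)
  rw [mul_one] at h
  refine h.congr_of_eventuallyEq (Eventually.of_forall fun w ↦ ?_)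
  simp only [vline]
  push_cast
  ring

lemma hasDerivAt_kernelRatio_vline {ε : ℝ} (hε : 0 < ε) (w : ℝ) :
    HasDerivAt (fun w ↦ kernelRatio (vline ε w))
      (deriv kernelRatio (vline ε w) * (2 * Real.pi * I)) w :=
  HasDerivAt.comp w (hasDerivAt_kernelRatio (by simpa using hε)).differentiableAt.hasDerivAt
    (hasDerivAt_vline ε w)

lemma hasDerivAt_deriv_kernelRatio_vline {ε : ℝ} (hε : 0 < ε) (w : ℝ) :
    HasDerivAt (deriv fun w ↦ kernelRatio (vline ε w))
      (deriv (deriv kernelRatio) (vline ε w) * (2 * Real.pi * I) * (2 * Real.pi * I)) w := by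
  have h : deriv (fun w ↦ kernelRatio (vline ε w)) =
      fun w ↦ deriv kernelRatio (vline ε w) * (2 * Real.pi * I) :=
    funext fun w ↦ (hasDerivAt_kernelRatio_vline hε w).deriv
  rw [h]
  exact (HasDerivAt.comp w (hasDerivAt_deriv_kernelRatio
    (by simpa using hε)).differentiableAt.hasDerivAt (hasDerivAt_vline ε w)).mul_const _

lemma exists_norm_fourier_kernelRatio_le :
    ∃ C : ℝ, 0 < C ∧ ∀ ε : ℝ, 0 < ε → ε ≤ 1 → ∀ x : ℝ,
      x ^ 2 * ‖𝓕 (fun w ↦ kernelRatio (vline ε w)) x‖ ≤ C := by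
  obtain ⟨C, hC, hK⟩ := exists_norm_kernelRatio_le
  set M : ℝ := ∫ w : ℝ, (1 + ‖w‖) ^ (-(3 / 2) : ℝ) with hM
  have hint : Integrable fun w : ℝ ↦ (1 + ‖w‖) ^ (-(3 / 2) : ℝ) :=
    integrable_one_add_norm (by norm_num)
  have hM0 : 0 ≤ M := integral_nonneg fun w ↦ by positivity
  refine ⟨C * M + 1, by positivity, fun ε hε hε1 x ↦ ?_⟩
  set φ : ℝ → ℂ := fun w ↦ kernelRatio (vline ε w) with hφ
  have hd0 : Differentiable ℝ φ := fun w ↦ (hasDerivAt_kernelRatio_vline hε w).differentiableAt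
  have hd1 : Differentiable ℝ (deriv φ) :=
    fun w ↦ (hasDerivAt_deriv_kernelRatio_vline hε w).differentiableAt
  have hle : ∀ w : ℝ, C * (1 + |(vline ε w).im|) ^ (-(3 / 2) : ℝ) ≤
      C * (1 + ‖w‖) ^ (-(3 / 2) : ℝ) := fun w ↦ by
    gcongr ?_ * ?_
    refine Real.rpow_le_rpow_of_nonpos (by positivity) ?_ (by norm_num)
    rw [vline_im, abs_mul, Real.norm_eq_abs, abs_of_pos (by positivity : 0 < 2 * Real.pi)]
    gcongr
    exact le_mul_of_one_le_left (abs_nonneg w) (by linarith [Real.pi_gt_three])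
  have hb := fun w : ℝ ↦ hK (vline ε w) (by simpa using hε) (by simpa using hε1)
  have hn : ‖(2 * Real.pi * I : ℂ)‖ = 2 * Real.pi := by
    simp [abs_of_pos Real.pi_pos]
  have i0 : Integrable φ := (hint.const_mul C).mono' hd0.continuous.aestronglyMeasurable
    (Eventually.of_forall fun w ↦ (hb w).1.trans (hle w))
  have i1 : Integrable (deriv φ) := ((hint.const_mul C).mul_const (2 * Real.pi)).mono'
    hd1.continuous.aestronglyMeasurable (Eventually.of_forall fun w ↦ by
      rw [(hasDerivAt_kernelRatio_vline hε w).deriv, norm_mul, hn]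
      gcongr
      exact (hb w).2.1.trans (hle w))
  have hb2 : ∀ w, ‖deriv (deriv φ) w‖ ≤
      C * (1 + ‖w‖) ^ (-(3 / 2) : ℝ) * (2 * Real.pi) * (2 * Real.pi) := fun w ↦ by
    rw [(hasDerivAt_deriv_kernelRatio_vline hε w).deriv, norm_mul, norm_mul, hn]
    gcongr
    exact (hb w).2.2.trans (hle w)
  have i2' := ((hint.const_mul C).mul_const (2 * Real.pi)).mul_const (2 * Real.pi)
  have i2 : Integrable (deriv (deriv φ)) := i2'.mono'
    (aestronglyMeasurable_deriv _ _) (Eventually.of_forall hb2)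
  have h := norm_fourier_mul_sq_le i0 hd0 i1 hd1 i2 x
  have h2 : ∫ w, ‖deriv (deriv φ) w‖ ≤ C * M * (2 * Real.pi) * (2 * Real.pi) := by
    refine (integral_mono i2.norm i2' hb2).trans (le_of_eq ?_)
    rw [integral_mul_const, integral_mul_const, integral_const_mul]
  have h3 : (2 * Real.pi) ^ 2 * (x ^ 2 * ‖𝓕 φ x‖) ≤ (2 * Real.pi) ^ 2 * (C * M) := by
    calc _ = (2 * Real.pi * x) ^ 2 * ‖𝓕 φ x‖ := by ring
      _ ≤ _ := h.trans h2
      _ = _ := by ring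
  have h4 := le_of_mul_le_mul_left h3 (by positivity)
  linarith

lemma one_sub_exp_neg_div_nonneg {v : ℝ} (hv : 0 < v) : 0 ≤ (1 - Real.exp (-v)) / v :=
  div_nonneg (by linarith [Real.exp_le_one_iff.mpr (by linarith : -v ≤ 0)]) hv.le

lemma one_sub_exp_neg_div_le_one {v : ℝ} (hv : 0 < v) : (1 - Real.exp (-v)) / v ≤ 1 := by
  rw [div_le_one hv]
  linarith [Real.add_one_le_exp (-v)]

lemma term_logZetaCoeff (s : ℂ) (n : ℕ) :
    LSeries.term (fun n ↦ (logZetaCoeff n : ℂ)) (1 + s) n =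
      ((logZetaCoeff n / n : ℝ) : ℂ) * cexp (-(s * Real.log n)) := by
  rcases eq_or_ne n 0 with rfl | hn
  · simp
  · have hn' : (n : ℂ) ≠ 0 := by exact_mod_cast hn
    rw [LSeries.term_of_ne_zero hn, cpow_add _ _ hn', cpow_one, cpow_def_of_ne_zero hn',
      ← natCast_log, Complex.exp_neg, mul_comm (Real.log n : ℂ) s]
    push_cast
    field_simp

lemma integrable_logZetaCoeff_div {ε : ℝ} (hε : 0 < ε) :
    Integrable (fun n : ℕ ↦ logZetaCoeff n / n * Real.exp (-(ε * Real.log n)))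
      (Measure.count : Measure ℕ) := by
  rw [integrable_count_iff]
  refine (lseriesSummable_logZetaCoeff (s := 1 + ε) (by simpa using hε)).norm.congr fun n ↦ ?_
  rw [term_logZetaCoeff, ← norm_real]
  push_cast
  rfl

lemma integral_logZetaCoeff_mul_exp {s : ℂ} (hs : 0 < s.re) :
    ∫ n : ℕ, ((logZetaCoeff n / n : ℝ) : ℂ) * cexp (-(s * Real.log n)) ∂Measure.count =
      logZeta (1 + s) := by
  simp only [← term_logZetaCoeff]
  rw [integral_countable (integrable_count_iff.mpr
    (lseriesSummable_logZetaCoeff (by simpa using hs)).norm)]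
  simp [logZeta, LSeries]

lemma integrable_one_sub_exp_neg_div {ε : ℝ} (hε : 0 < ε) :
    Integrable (fun v : ℝ ↦ (1 - Real.exp (-v)) / v * Real.exp (-(ε * v)))
      (volume.restrict (Ioi 0)) := by
  refine (integrableOn_exp_mul_Ioi (by linarith : -ε < 0) 0).mono'
    (Measurable.aestronglyMeasurable (by fun_prop)) ?_
  refine (ae_restrict_iff' measurableSet_Ioi).mpr (Eventually.of_forall fun v hv ↦ ?_)
  rw [Real.norm_of_nonneg (mul_nonneg (one_sub_exp_neg_div_nonneg hv) (Real.exp_pos _).le),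
    neg_mul]
  exact mul_le_of_le_one_left (Real.exp_pos _).le (one_sub_exp_neg_div_le_one hv)

lemma exists_abs_integral_sub_integral_le :
    ∃ C : ℝ, 0 < C ∧ ∀ L : ℝ,
      L ^ 2 * |∫ n : ℕ, logZetaCoeff n / n * hinge (L - Real.log n) ∂Measure.count -
        ∫ v in Ioi (0 : ℝ), (1 - Real.exp (-v)) / v * hinge (L - v)| ≤ C := by
  obtain ⟨C, hC, hF⟩ := exists_norm_fourier_kernelRatio_le
  refine ⟨C, hC, fun L ↦ ?_⟩
  set B := ∫ n : ℕ, logZetaCoeff n / n * hinge (L - Real.log n) ∂Measure.count -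
        ∫ v in Ioi (0 : ℝ), (1 - Real.exp (-v)) / v * hinge (L - v) with hB
  have key : ∀ ε : ℝ, 0 < ε → ε ≤ 1 → L ^ 2 * (Real.exp (-(ε * L)) * |B|) ≤ C := by
    intro ε hε hε1
    obtain ⟨a1, a2⟩ := integral_weight_mul_hinge (Measure.count : Measure ℕ)
      (W := fun n ↦ logZetaCoeff n / n) (v := fun n ↦ Real.log n) (measurable_from_nat) hε
      (integrable_logZetaCoeff_div hε) L
    obtain ⟨b1, b2⟩ := integral_weight_mul_hinge (volume.restrict (Ioi (0 : ℝ)))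
      (W := fun v ↦ (1 - Real.exp (-v)) / v) (v := fun v ↦ v) measurable_id hε
      (integrable_one_sub_exp_neg_div hε) L
    have h1 : 𝓕 (fun w ↦ kernelRatio (vline ε w)) (-L) = ((Real.exp (-(ε * L)) * B : ℝ) : ℂ) := by
      rw [hB, mul_sub, ofReal_sub, ← a2, ← b2, ← integral_sub a1 b1,
        Real.fourier_real_eq_integral_exp_smul]
      refine integral_congr_ae (Eventually.of_forall fun w ↦ ?_)
      have hre : 0 < (vline ε w).re := by simpa using hε
      simp only [smul_eq_mul]
      rw [integral_logZetaCoeff_mul_exp hre, integral_one_sub_exp_div_mul_exp hre, kernelRatio,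
        logRatio, add_sub_cancel_left]
      have h2 : -2 * Real.pi * w * -L = 2 * Real.pi * w * L := by ring
      rw [h2]
      ring
    have h3 := hF ε hε hε1 (-L)
    rw [h1, norm_real, norm_mul, Real.norm_of_nonneg (Real.exp_pos _).le, neg_sq] at h3
    exact h3
  have hlim : Tendsto (fun ε : ℝ ↦ L ^ 2 * (Real.exp (-(ε * L)) * |B|)) (𝓝[>] 0)
      (𝓝 (L ^ 2 * |B|)) := by
    have h : Continuous fun ε : ℝ ↦ L ^ 2 * (Real.exp (-(ε * L)) * |B|) := by fun_prop
    simpa using (h.tendsto 0).mono_left (nhdsWithin_le_nhds (s := Ioi 0))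
  refine le_of_tendsto hlim ?_
  filter_upwards [Ioc_mem_nhdsGT (zero_lt_one' ℝ)] with ε hε using key ε hε.1 hε.2

lemma integral_logZetaCoeff_mul_hinge {X : ℝ} (hX : 1 < X) :
    ∫ n : ℕ, logZetaCoeff n / n * hinge (Real.log X - Real.log n) ∂Measure.count =
      ∑ n ∈ Finset.range (⌊X⌋₊ + 1), logZetaCoeff n / n * (1 - n / X) := by
  have hX0 : 0 < X := by linarith
  have hout : ∀ n ∉ Finset.range (⌊X⌋₊ + 1),
      logZetaCoeff n / n * hinge (Real.log X - Real.log n) = 0 := fun n hn ↦ by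
    rw [Finset.mem_range, not_lt] at hn
    have : X < n := (Nat.floor_lt hX0.le).mp (by omega)
    rw [hinge_of_nonpos (by linarith [Real.log_le_log hX0 this.le]), mul_zero]
  have hs : Summable fun n : ℕ ↦ ‖logZetaCoeff n / n * hinge (Real.log X - Real.log n)‖ :=
    summable_of_ne_finset_zero (s := Finset.range (⌊X⌋₊ + 1))
      (fun n hn ↦ by simp only [hout n hn, norm_zero])
  rw [integral_countable (integrable_count_iff.mpr hs)]
  simp only [count_real_singleton, one_smul]
  rw [tsum_eq_sum hout]
  refine Finset.sum_congr rfl fun n hn ↦ ?_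
  rcases eq_or_ne n 0 with rfl | hn0
  · simp
  have hnX : (n : ℝ) ≤ X := (Nat.le_floor_iff hX0.le).mp (by
    rw [Finset.mem_range] at hn; omega)
  have hnpos : (0 : ℝ) < n := by positivity
  rw [hinge_of_nonneg (by linarith [Real.log_le_log hnpos hnX]), neg_sub, Real.exp_sub,
    Real.exp_log hX0, Real.exp_log hnpos]

lemma exists_sum_logZetaCoeff_ge :
    ∃ C : ℝ, 0 < C ∧ ∀ X : ℝ, 1 < X →
      (∫ v in Ioi (0 : ℝ), (1 - Real.exp (-v)) / v * hinge (Real.log X - v)) -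
        C / Real.log X ^ 2 ≤
      ∑ n ∈ Finset.range (⌊X⌋₊ + 1), logZetaCoeff n / n * (1 - n / X) := by
  obtain ⟨C, hC, h⟩ := exists_abs_integral_sub_integral_le
  refine ⟨C, hC, fun X hX ↦ ?_⟩
  have h1 := h (Real.log X)
  have hL := Real.log_pos hX
  rw [integral_logZetaCoeff_mul_hinge hX, mul_comm, ← le_div_iff₀ (by positivity)] at h1
  linarith [(abs_le.mp h1).1]

end ResonatorProduct

namespace ResonatorProduct

open Complex Filter Topology MeasureTheory Set

theorem integrableOn_log_mul_exp_neg :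
    IntegrableOn (fun v : ℝ => Real.log v * Real.exp (-v)) (Ioi 0) := by
  have h : MellinConvergent (fun t : ℝ => Real.log t • ((Real.exp (-t) : ℝ) : ℂ)) 1 := by
    refine (mellin_hasDerivAt_of_isBigO_rpow (E := ℂ) (a := 2) (b := 0) ?_ ?_ (by norm_num)
      ?_ (by norm_num)).1
    · refine (Continuous.continuousOn ?_).locallyIntegrableOn measurableSet_Ioi
      exact continuous_ofReal.comp (Real.continuous_exp.comp continuous_neg)
    · rw [← Asymptotics.isBigO_norm_left]
      simp_rw [norm_real, Asymptotics.isBigO_norm_left]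
      simpa only [neg_one_mul] using (isLittleO_exp_neg_mul_rpow_atTop zero_lt_one _).isBigO
    · simp_rw [neg_zero, Real.rpow_zero]
      refine Asymptotics.isBigO_const_of_tendsto (?_ : Tendsto _ _ (𝓝 (1 : ℂ))) one_ne_zero
      rw [(by simp : (1 : ℂ) = Real.exp (-0))]
      exact (continuous_ofReal.comp (Real.continuous_exp.comp continuous_neg)).continuousWithinAt
  have h2 := MeasureTheory.Integrable.re h
  refine h2.congr (Eventually.of_forall fun t => ?_)
  simp [-Complex.ofReal_exp]

theorem integral_log_mul_exp_neg :
    ∫ v in Ioi (0 : ℝ), Real.log v * Real.exp (-v) = -Real.eulerMascheroniConstant := by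
  have h1 := Complex.hasDerivAt_GammaIntegral (s := 1) (by simp)
  have hev : Complex.Gamma =ᶠ[𝓝 1] Complex.GammaIntegral := by
    have : IsOpen {s : ℂ | 0 < s.re} := continuous_re.isOpen_preimage _ isOpen_Ioi
    filter_upwards [this.mem_nhds (by simp : (1 : ℂ) ∈ {s : ℂ | 0 < s.re})] with s hs
    exact Complex.Gamma_eq_integral hs
  have h2 := (h1.congr_of_eventuallyEq hev).unique Complex.hasDerivAt_Gamma_one
  simp only [sub_self, Complex.cpow_zero, one_mul] at h2
  have h3 : ∫ t in Ioi (0 : ℝ), ((Real.log t : ℂ) * (Real.exp (-t) : ℂ))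
      = ((∫ v in Ioi (0 : ℝ), Real.log v * Real.exp (-v) : ℝ) : ℂ) := by
    rw [← integral_complex_ofReal]
    simp
  rw [h3] at h2
  exact_mod_cast h2

theorem intervalIntegrable_one_sub_exp_neg_div {L : ℝ} (hL : 0 ≤ L) :
    IntervalIntegrable (fun v : ℝ => (1 - Real.exp (-v)) / v) volume 0 L := by
  refine (intervalIntegrable_const (c := (1 : ℝ))).mono_fun' (by
    apply Measurable.aestronglyMeasurable; fun_prop) ?_
  rw [uIoc_of_le hL]
  refine (ae_restrict_iff' measurableSet_Ioc).2 (Eventually.of_forall fun v hv => ?_)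
  dsimp only
  rw [Real.norm_of_nonneg (one_sub_exp_neg_div_nonneg hv.1)]
  exact one_sub_exp_neg_div_le_one hv.1

theorem intervalIntegrable_exp_sub_one_div {L : ℝ} (hL : 0 ≤ L) :
    IntervalIntegrable (fun v : ℝ => (Real.exp v - 1) / v) volume 0 L := by
  have h := (intervalIntegrable_one_sub_exp_neg_div hL).mul_continuousOn
    (Real.continuous_exp.continuousOn (s := uIcc 0 L))
  refine h.congr (fun v _ => ?_)
  have : Real.exp (-v) * Real.exp v = 1 := by rw [← Real.exp_add]; simp
  rw [div_mul_eq_mul_div, sub_mul, this, one_mul]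

theorem continuous_one_sub_exp_neg_mul_log :
    Continuous (fun v : ℝ => (1 - Real.exp (-v)) * Real.log v) := by
  rw [continuous_iff_continuousAt]
  intro x
  by_cases hx : x = 0
  · subst hx
    have h1 : Tendsto (fun v : ℝ => dslope (fun v : ℝ => 1 - Real.exp (-v)) 0 v
        * (v * Real.log v)) (𝓝 0)
        (𝓝 (dslope (fun v : ℝ => 1 - Real.exp (-v)) 0 0 * (0 * Real.log 0))) := by
      refine Tendsto.mul ?_ Real.continuous_mul_log.continuousAt
      exact continuousAt_dslope_same.2 (by fun_prop)
    have h2 : (fun v : ℝ => (1 - Real.exp (-v)) * Real.log v)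
        = fun v : ℝ => dslope (fun v : ℝ => 1 - Real.exp (-v)) 0 v * (v * Real.log v) := by
      funext v
      have := sub_smul_dslope (fun v : ℝ => 1 - Real.exp (-v)) 0 v
      simp only [smul_eq_mul, sub_zero, neg_zero, Real.exp_zero, sub_self] at this
      rw [← this]
      ring
    rw [h2]
    exact h1
  · exact (by fun_prop : ContinuousAt (fun v : ℝ => 1 - Real.exp (-v)) x).mul
      (Real.continuousAt_log hx)

theorem integral_one_sub_exp_neg_div_ge {L : ℝ} (hL : 1 ≤ L) :
    Real.log L + Real.eulerMascheroniConstant ≤ ∫ v in (0 : ℝ)..L, (1 - Real.exp (-v)) / v := by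
  have hL0 : 0 ≤ L := by linarith
  have hi := integrableOn_log_mul_exp_neg
  have hi1 : IntervalIntegrable (fun v : ℝ => Real.log v * Real.exp (-v)) volume 0 L := by
    rw [intervalIntegrable_iff_integrableOn_Ioc_of_le hL0]
    exact hi.mono_set Ioc_subset_Ioi_self
  have hi2 : IntegrableOn (fun v : ℝ => Real.log v * Real.exp (-v)) (Ioi L) :=
    hi.mono_set (Ioi_subset_Ioi hL0)
  have hF := intervalIntegral.integral_eq_sub_of_hasDerivAt_of_le hL0
    (f := fun v : ℝ => (1 - Real.exp (-v)) * Real.log v)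
    (f' := fun v : ℝ => Real.log v * Real.exp (-v) + (1 - Real.exp (-v)) / v)
    continuous_one_sub_exp_neg_mul_log.continuousOn
    (fun x hx => by
      have h1 : HasDerivAt (fun v : ℝ => 1 - Real.exp (-v)) (Real.exp (-x)) x := by
        have := ((hasDerivAt_neg x).exp).const_sub 1
        simpa using this
      refine (h1.fun_mul (Real.hasDerivAt_log hx.1.ne')).congr_deriv ?_
      rw [div_eq_mul_inv]
      ring)
    (hi1.add (intervalIntegrable_one_sub_exp_neg_div hL0))
  rw [intervalIntegral.integral_add hi1 (intervalIntegrable_one_sub_exp_neg_div hL0)] at hF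
  have hsplit : (∫ v in (0 : ℝ)..L, Real.log v * Real.exp (-v))
      + ∫ v in Ioi L, Real.log v * Real.exp (-v) = -Real.eulerMascheroniConstant := by
    rw [← integral_log_mul_exp_neg]
    exact intervalIntegral.integral_interval_add_Ioi hi hi2
  have htail : Real.log L * Real.exp (-L) ≤ ∫ v in Ioi L, Real.log v * Real.exp (-v) := by
    rw [← integral_exp_neg_Ioi L, ← integral_const_mul]
    refine setIntegral_mono_on ((integrableOn_exp_neg_Ioi L).const_mul _) hi2 measurableSet_Ioi
      fun v hv => ?_
    gcongr
    exact le_of_lt hv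
  simp only [neg_zero, Real.exp_zero, sub_self, zero_mul, sub_zero] at hF
  linarith

theorem exists_integral_exp_sub_one_div_le :
    ∃ A : ℝ, 0 < A ∧ ∀ L : ℝ, 4 ≤ L →
      ∫ v in (0 : ℝ)..L, (Real.exp v - 1) / v ≤ Real.exp L * (1 / L + A / L ^ 2) := by
  set I := ∫ v in (0 : ℝ)..4, (Real.exp v - 1) / v with hI
  have hI0 : 0 ≤ I := intervalIntegral.integral_nonneg (by norm_num) fun v hv =>
    div_nonneg (by linarith [Real.one_le_exp hv.1]) hv.1
  refine ⟨2 + 16 * I, by positivity, fun L hL => ?_⟩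
  set A := 2 + 16 * I with hA
  have hA2 : 2 ≤ A := by linarith
  have hint := intervalIntegrable_exp_sub_one_div (L := L) (by linarith)
  have hint4 := intervalIntegrable_exp_sub_one_div (L := 4) (by norm_num)
  have hint4L : IntervalIntegrable (fun v : ℝ => (Real.exp v - 1) / v) volume 4 L :=
    hint4.symm.trans hint
  have hder : ∀ x : ℝ, 0 < x → HasDerivAt (fun v : ℝ => Real.exp v * (1 / v + A / v ^ 2))
      (Real.exp x * (1 / x + (A - 1) / x ^ 2 - 2 * A / x ^ 3)) x := by
    intro x hx
    have h1 : HasDerivAt (fun v : ℝ => 1 / v + A / v ^ 2) (-1 / x ^ 2 - 2 * A / x ^ 3) x := by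
      have h2 := ((hasDerivAt_id x).fun_inv hx.ne')
      have h3 := (((hasDerivAt_id x).fun_pow 2).fun_inv (pow_ne_zero 2 hx.ne')).const_mul A
      refine ((h2.add h3).congr_of_eventuallyEq (Eventually.of_forall fun v => ?_)).congr_deriv ?_
      · simp [div_eq_mul_inv]
      · simp
        field_simp
        ring
    refine ((Real.hasDerivAt_exp x).fun_mul h1).congr_deriv ?_
    field_simp
    ring
  have h4L := intervalIntegral.integral_le_sub_of_hasDeriv_right_of_le hL
    (g := fun v : ℝ => Real.exp v * (1 / v + A / v ^ 2))
    (g' := fun x => Real.exp x * (1 / x + (A - 1) / x ^ 2 - 2 * A / x ^ 3))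
    (φ := fun v : ℝ => (Real.exp v - 1) / v)
    (fun x hx => (hder x (by linarith [hx.1])).continuousAt.continuousWithinAt)
    (fun x hx => (hder x (by linarith [hx.1])).hasDerivWithinAt)
    ((intervalIntegrable_iff_integrableOn_Icc_of_le hL).1 hint4L)
    (fun x hx => by
      have hx4 : 4 < x := hx.1
      have hx0 : 0 < x := by linarith
      have h1 : 0 ≤ (A - 1) / x ^ 2 - 2 * A / x ^ 3 := by
        have : (A - 1) / x ^ 2 - 2 * A / x ^ 3 = ((A - 1) * x - 2 * A) / x ^ 3 := by
          field_simp
        rw [this]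
        apply div_nonneg _ (by positivity)
        nlinarith
      have h2 : Real.exp x * (1 / x + (A - 1) / x ^ 2 - 2 * A / x ^ 3)
          = Real.exp x / x + Real.exp x * ((A - 1) / x ^ 2 - 2 * A / x ^ 3) := by ring
      rw [h2, sub_div]
      have := mul_nonneg (Real.exp_pos x).le h1
      have : 0 < 1 / x := by positivity
      linarith)
  rw [← intervalIntegral.integral_add_adjacent_intervals hint4 hint4L, ← hI]
  have h5 : I ≤ Real.exp 4 * (1 / 4 + A / 4 ^ 2) := by
    have h6 : 1 ≤ Real.exp 4 := Real.one_le_exp (by norm_num)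
    have h7 : I ≤ 1 / 4 + A / 4 ^ 2 := by rw [hA]; linarith
    nlinarith
  linarith

theorem integral_hinge_eq {L : ℝ} (hL : 0 ≤ L) :
    ∫ v in Ioi (0 : ℝ), (1 - Real.exp (-v)) / v * hinge (L - v)
      = (∫ v in (0 : ℝ)..L, (1 - Real.exp (-v)) / v)
        - Real.exp (-L) * ∫ v in (0 : ℝ)..L, (Real.exp v - 1) / v := by
  rw [← intervalIntegral.integral_const_mul, ← intervalIntegral.integral_sub
    (intervalIntegrable_one_sub_exp_neg_div hL)
    ((intervalIntegrable_exp_sub_one_div hL).const_mul _), intervalIntegral.integral_of_le hL]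
  rw [setIntegral_eq_of_subset_of_forall_sdiff_eq_zero measurableSet_Ioi
    (Ioc_subset_Ioi_self : Ioc 0 L ⊆ Ioi 0)]
  · refine setIntegral_congr_fun measurableSet_Ioc fun v hv => ?_
    rw [hinge_of_nonneg (by linarith [hv.2])]
    have h1 : Real.exp (-(L - v)) = Real.exp (-L) * Real.exp v := by
      rw [← Real.exp_add]; ring_nf
    have h2 : Real.exp (-v) * Real.exp v = 1 := by rw [← Real.exp_add]; simp
    rw [h1]
    have hv0 : v ≠ 0 := hv.1.ne'
    field_simp
    linear_combination (Real.exp (-L)) * h2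
  · intro v hv
    have : L < v := by
      by_contra h
      exact hv.2 ⟨hv.1, not_lt.1 h⟩
    rw [hinge_of_nonpos (by linarith), mul_zero]

theorem exists_integral_hinge_ge :
    ∃ A : ℝ, 0 < A ∧ ∀ L : ℝ, 4 ≤ L →
      Real.log L + Real.eulerMascheroniConstant - 1 / L - A / L ^ 2
        ≤ ∫ v in Ioi (0 : ℝ), (1 - Real.exp (-v)) / v * hinge (L - v) := by
  obtain ⟨A, hA, h⟩ := exists_integral_exp_sub_one_div_le
  refine ⟨A, hA, fun L hL => ?_⟩
  rw [integral_hinge_eq (by linarith)]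
  have h1 := integral_one_sub_exp_neg_div_ge (L := L) (by linarith)
  have h2 := mul_le_mul_of_nonneg_left (h L hL) (Real.exp_pos (-L)).le
  have h3 : Real.exp (-L) * Real.exp L = 1 := by rw [← Real.exp_add]; simp
  rw [← mul_assoc, h3, one_mul] at h2
  linarith

end ResonatorProduct

namespace ResonatorProduct

open scoped ArithmeticFunction.vonMangoldt

theorem logZetaCoeff_prime_pow {p k : ℕ} (hp : p.Prime) (hk : k ≠ 0) :
    logZetaCoeff (p ^ k) = 1 / k := by
  have hlog : 0 < Real.log p := Real.log_pos (by exact_mod_cast hp.one_lt)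
  have hk' : (k : ℝ) ≠ 0 := by exact_mod_cast hk
  rw [logZetaCoeff, ArithmeticFunction.vonMangoldt_apply_pow hk,
    ArithmeticFunction.vonMangoldt_apply_prime hp, Nat.cast_pow, Real.log_pow]
  field_simp

theorem logZetaCoeff_eq_zero_of_not_isPrimePow {n : ℕ} (hn : ¬ IsPrimePow n) :
    logZetaCoeff n = 0 := by
  rw [logZetaCoeff, ArithmeticFunction.vonMangoldt_eq_zero_iff.2 hn, zero_div]

theorem one_sub_pow_div_le {p k : ℕ} {X : ℝ} (hp : p.Prime) (hk : k ≠ 0) (hpX : (p : ℝ) ≤ X) :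
    1 - (p : ℝ) ^ k / X ≤ (1 - p / X) ^ k := by
  have hp0 : (0 : ℝ) < p := by exact_mod_cast hp.pos
  have hX : 0 < X := hp0.trans_le hpX
  have hle : (p : ℝ) / X ≤ 1 := (div_le_one hX).2 hpX
  have hkp : (k : ℝ) * p ≤ (p : ℝ) ^ k := by
    obtain ⟨j, rfl⟩ := Nat.exists_eq_succ_of_ne_zero hk
    have h : j + 1 ≤ p ^ j := Nat.lt_pow_self hp.one_lt
    have := Nat.mul_le_mul_right p h
    rw [← pow_succ] at this
    exact_mod_cast this
  have hb := one_add_mul_le_pow (a := -((p : ℝ) / X)) (by linarith) k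
  have hd : (k : ℝ) * (p / X) ≤ (p : ℝ) ^ k / X := by
    rw [← mul_div_assoc]
    gcongr
  rw [← sub_eq_add_neg] at hb
  linarith

theorem logZetaCoeff_prime_pow_term_le {p k : ℕ} {X : ℝ} (hp : p.Prime) (hk : k ≠ 0)
    (hpX : (p : ℝ) ≤ X) :
    logZetaCoeff (p ^ k) / ((p ^ k : ℕ) : ℝ) * (1 - ((p ^ k : ℕ) : ℝ) / X)
      ≤ ((1 - (p : ℝ) / X) / p) ^ k / k := by
  rw [logZetaCoeff_prime_pow hp hk, Nat.cast_pow, div_pow, div_div, div_div,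
    mul_comm ((p : ℝ) ^ k), one_div_mul_eq_div]
  exact div_le_div_of_nonneg_right (one_sub_pow_div_le hp hk hpX) (by positivity)

theorem sum_pow_div_le_neg_log {u : ℝ} (hu0 : 0 ≤ u) (hu1 : u < 1) (N : ℕ) :
    ∑ k ∈ Finset.range N, u ^ (k + 1) / ((k + 1 : ℕ) : ℝ) ≤ -Real.log (1 - u) := by
  have h := Real.hasSum_pow_div_log_of_abs_lt_one (x := u) (by rwa [abs_of_nonneg hu0])
  have := sum_le_hasSum (Finset.range N) (fun k _ => by positivity) h
  simpa using this

theorem one_sub_div_div_nonneg {p : ℕ} {X : ℝ} (hp : p.Prime) (hpX : (p : ℝ) ≤ X) :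
    0 ≤ (1 - (p : ℝ) / X) / p := by
  have hp0 : (0 : ℝ) < p := by exact_mod_cast hp.pos
  have hle : (p : ℝ) / X ≤ 1 := (div_le_one (hp0.trans_le hpX)).2 hpX
  exact div_nonneg (by linarith) hp0.le

theorem one_sub_div_div_lt_one {p : ℕ} {X : ℝ} (hp : p.Prime) (hpX : (p : ℝ) ≤ X) :
    (1 - (p : ℝ) / X) / p < 1 := by
  have hp1 : (1 : ℝ) < p := by exact_mod_cast hp.one_lt
  have : 0 ≤ (p : ℝ) / X := by
    have := hp1.trans_le hpX
    positivity
  rw [div_lt_one (by linarith)]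
  linarith

theorem sum_primePow_minFac_le {p N : ℕ} {X : ℝ} (hp : p.Prime) (hpX : (p : ℝ) ≤ X) :
    ∑ n ∈ ((Finset.range (N + 1)).filter IsPrimePow).filter (fun n => n.minFac = p),
        logZetaCoeff n / n * (1 - n / X)
      ≤ -Real.log (1 - (1 - (p : ℝ) / X) / p) := by
  classical
  have hu := one_sub_div_div_nonneg hp hpX
  set u := (1 - (p : ℝ) / X) / p with hu_def
  refine le_trans ?_ (sum_pow_div_le_neg_log hu (one_sub_div_div_lt_one hp hpX) N)
  have hform : ∀ n ∈ ((Finset.range (N + 1)).filter IsPrimePow).filter (fun n => n.minFac = p),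
      ∃ k ∈ Finset.range N, p ^ (k + 1) = n := by
    intro n hn
    simp only [Finset.mem_filter, Finset.mem_range] at hn
    obtain ⟨⟨hnN, hpp⟩, hmin⟩ := hn
    obtain ⟨q, k, hq, hk, rfl⟩ := (isPrimePow_nat_iff n).1 hpp
    rw [hq.pow_minFac hk.ne'] at hmin
    subst hmin
    have hlt : k < q ^ k := Nat.lt_pow_self hq.one_lt
    exact ⟨k - 1, Finset.mem_range.2 (by omega), by rw [Nat.sub_add_cancel hk]⟩
  calc _ ≤ ∑ n ∈ ((Finset.range (N + 1)).filter IsPrimePow).filter (fun n => n.minFac = p),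
          u ^ (Nat.log p n) / (Nat.log p n : ℝ) := by
        refine Finset.sum_le_sum fun n hn => ?_
        obtain ⟨k, -, rfl⟩ := hform n hn
        rw [Nat.log_pow hp.one_lt]
        exact logZetaCoeff_prime_pow_term_le hp k.succ_ne_zero hpX
    _ ≤ ∑ n ∈ (Finset.range N).image (fun k => p ^ (k + 1)),
          u ^ (Nat.log p n) / (Nat.log p n : ℝ) := by
        refine Finset.sum_le_sum_of_subset_of_nonneg (fun n hn => ?_) fun n _ _ => by positivity
        exact Finset.mem_image.2 (hform n hn)
    _ = _ := by
        rw [Finset.sum_image fun a _ b _ hab => by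
          simpa using Nat.pow_right_injective hp.two_le hab]
        exact Finset.sum_congr rfl fun k _ => by rw [Nat.log_pow hp.one_lt]

theorem sum_logZetaCoeff_le_sum_neg_log {X : ℝ} (hX : 0 ≤ X) :
    ∑ n ∈ Finset.range (⌊X⌋₊ + 1), logZetaCoeff n / n * (1 - n / X)
      ≤ ∑ p ∈ (Finset.range (⌊X⌋₊ + 1)).filter Nat.Prime,
          -Real.log (1 - (1 - (p : ℝ) / X) / p) := by
  classical
  rw [← Finset.sum_filter_of_ne (p := IsPrimePow) fun n _ hne => by
    by_contra h
    exact hne (by rw [logZetaCoeff_eq_zero_of_not_isPrimePow h, zero_div, zero_mul])]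
  rw [← Finset.sum_fiberwise_of_maps_to (g := Nat.minFac)
    (t := (Finset.range (⌊X⌋₊ + 1)).filter Nat.Prime) fun n hn => by
      simp only [Finset.mem_filter, Finset.mem_range] at hn ⊢
      exact ⟨(Nat.minFac_le hn.2.pos).trans_lt hn.1, Nat.minFac_prime hn.2.ne_one⟩]
  refine Finset.sum_le_sum fun p hp => ?_
  simp only [Finset.mem_filter, Finset.mem_range] at hp
  exact sum_primePow_minFac_le hp.2 ((Nat.le_floor_iff hX).1 (by omega))

theorem exp_sum_logZetaCoeff_le_prod {X : ℝ} (hX : 0 ≤ X) :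
    Real.exp (∑ n ∈ Finset.range (⌊X⌋₊ + 1), logZetaCoeff n / n * (1 - n / X))
      ≤ ∏ p ∈ (Finset.range (⌊X⌋₊ + 1)).filter Nat.Prime,
          (1 - (1 - (p : ℝ) / X) / p)⁻¹ := by
  refine (Real.exp_le_exp.2 (sum_logZetaCoeff_le_sum_neg_log hX)).trans_eq ?_
  rw [Real.exp_sum]
  refine Finset.prod_congr rfl fun p hp => ?_
  simp only [Finset.mem_filter, Finset.mem_range] at hp
  have := one_sub_div_div_lt_one hp.2 ((Nat.le_floor_iff hX).1 (by omega : p ≤ ⌊X⌋₊))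
  rw [Real.exp_neg, Real.exp_log (by linarith)]

end ResonatorProduct

open Real Finset

/-- A Mertens-type lower bound for the resonator product:
∏_{p ≤ X} (1 − (1 − p/X)/p)^{−1} ≥ e^γ (log X)(1 − 1/log X − A/(log X)²). -/
theorem resonator_product_lower_bound :
    ∃ A : ℝ, 0 < A ∧ ∃ X₀ : ℝ, ∀ X : ℝ, X₀ ≤ X →
      ∏ p ∈ (Finset.range (Nat.floor X + 1)).filter Nat.Prime,
          (1 - (1 - (p : ℝ) / X) / p)⁻¹ ≥
        Real.exp Real.eulerMascheroniConstant * Real.log X *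
          (1 - 1 / Real.log X - A / (Real.log X) ^ (2 : ℕ)) := by
  obtain ⟨C, hC, hsum⟩ := ResonatorProduct.exists_sum_logZetaCoeff_ge
  obtain ⟨A, hA, hint⟩ := ResonatorProduct.exists_integral_hinge_ge
  refine ⟨A + C, by positivity, Real.exp 4, fun X hX => ?_⟩
  have hX1 : 1 < X := (Real.one_lt_exp_iff.2 (by norm_num)).trans_le hX
  have hL : 4 ≤ Real.log X := (Real.le_log_iff_exp_le (by linarith)).2 hX
  have hL0 : 0 < Real.log X := by linarith
  refine le_trans ?_ (ResonatorProduct.exp_sum_logZetaCoeff_le_prod (X := X) (by linarith))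
  set E := 1 / Real.log X + (A + C) / Real.log X ^ 2 with hE
  have hlow : Real.eulerMascheroniConstant + Real.log (Real.log X) + -E
      ≤ ∑ n ∈ Finset.range (⌊X⌋₊ + 1), ResonatorProduct.logZetaCoeff n / n * (1 - n / X) := by
    rw [hE, add_div]
    linarith [hsum X hX1, hint _ hL]
  refine le_trans ?_ (Real.exp_le_exp.2 hlow)
  rw [Real.exp_add, Real.exp_add, Real.exp_log hL0]
  refine mul_le_mul_of_nonneg_left ?_ (by positivity)
  linarith [Real.add_one_le_exp (-E)]
end

section
/- As X → ∞, one has (log X / X) · Σ_{p ≤ X, p prime} ( − log( 1 − (1 − p/X)² ) ) → 2 − log 4. Equivalently, log ∏_{p ≤ X} (1 − (1 − p/X)²)^{−1} = (2 − log 4 + o(1)) · X / log X. -/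
open Real Finset Filter

open MeasureTheory FourierTransform Topology in
/-- If the Laplace transform of a bounded function `f` extends continuously to the closed right
half-plane, then the correlations of `f` with a kernel whose Fourier transform has compact support
vanish at infinity. -/
theorem tendsto_integral_mul_fourier_of_laplace_continuousOn {f : ℝ → ℝ} {M : ℝ} {G : ℂ → ℂ}
    {φ : ℝ → ℂ} (hf : Measurable f) (hM : ∀ t, |f t| ≤ M) (hf0 : ∀ t ≤ 0, f t = 0)
    (hG : ContinuousOn G {z | 0 ≤ z.re})
    (hfG : ∀ z : ℂ, 0 < z.re → ∫ t in Set.Ioi (0 : ℝ), (f t : ℂ) * Complex.exp (-z * t) = G z)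
    (hφ : Continuous φ) (hφc : HasCompactSupport φ) (hφi : Integrable (𝓕 φ)) :
    Tendsto (fun y : ℝ ↦ ∫ t, 𝓕 φ (t - y) * (f t : ℂ)) atTop (𝓝 0) := by
  have hφint : Integrable φ := hφ.integrable_of_hasCompactSupport hφc
  have hshift (y t : ℝ) : 𝓕 (fun ξ ↦ (𝐞 (y * ξ) : ℂ) * φ ξ) t = 𝓕 φ (t - y) := by
    simp_rw [fourier_real_eq, Circle.smul_def, smul_eq_mul, ← mul_assoc]
    congr 1 with ξ
    rw [← Circle.coe_mul, ← AddChar.map_add_eq_mul]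
    ring_nf
  have hInt (ε : ℝ) (hε : 0 < ε) : Integrable (fun t ↦ (f t : ℂ) * Complex.exp (-ε * t)) := by
    have h1 : IntegrableOn (fun t ↦ (f t : ℂ) * Complex.exp (-ε * t)) (Set.Ioi 0) := by
      have h2 : IntegrableOn (fun t : ℝ ↦ (Real.exp (-ε * t) : ℂ)) (Set.Ioi 0) :=
        (integrableOn_exp_mul_Ioi (by linarith : -ε < 0) 0).ofReal
      refine (h2.bdd_mul (c := M) (f := fun t ↦ (f t : ℂ)) (by fun_prop)
        (.of_forall fun t ↦ by simpa using hM t)).congr (.of_forall fun t ↦ by simp)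
    rwa [integrableOn_iff_integrable_of_support_subset] at h1
    intro t ht
    by_contra h
    simp [hf0 t (by simpa using h)] at ht
  have hFG (ε : ℝ) (hε : 0 < ε) (ξ : ℝ) :
      𝓕 (fun t ↦ (f t : ℂ) * Complex.exp (-ε * t)) ξ = G (ε + 2 * π * ξ * Complex.I) := by
    rw [← hfG _ (by simpa using hε), fourier_real_eq_integral_exp_smul,
      ← setIntegral_eq_integral_of_forall_compl_eq_zero (s := Set.Ioi 0)]
    · congr 1 with t
      rw [smul_eq_mul, mul_left_comm, ← Complex.exp_add]
      congr 2
      push_cast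
      ring
    · intro t ht
      simp [hf0 t (by simpa using ht)]
  have hparseval (y ε : ℝ) (hε : 0 < ε) :
      ∫ t, 𝓕 φ (t - y) * ((f t : ℂ) * Complex.exp (-ε * t)) =
        ∫ ξ, ((𝐞 (y * ξ) : ℂ) * φ ξ) * G (ε + 2 * π * ξ * Complex.I) := by
    have h1 : Integrable (fun ξ ↦ (𝐞 (y * ξ) : ℂ) * φ ξ) := by
      refine hφint.bdd_mul (c := 1) ?_ (.of_forall fun t ↦ (Circle.norm_coe _).le)
      exact (by fun_prop : Continuous fun ξ : ℝ ↦ (𝐞 (y * ξ) : ℂ)).aestronglyMeasurable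
    have := VectorFourier.integral_fourierIntegral_smul_eq_flip (L := innerₗ ℝ)
      Real.continuous_fourierChar continuous_inner h1 (hInt ε hε)
    simp_rw [← hshift, ← hFG ε hε]
    simpa using! this
  have hlim (y : ℝ) : ∫ t, 𝓕 φ (t - y) * (f t : ℂ) =
      𝓕 (fun ξ : ℝ ↦ φ ξ * G (2 * π * ξ * Complex.I)) (-y) := by
    have hL : Tendsto (fun ε : ℝ ↦ ∫ t, 𝓕 φ (t - y) * ((f t : ℂ) * Complex.exp (-ε * t)))
        (𝓝[>] 0) (𝓝 (∫ t, 𝓕 φ (t - y) * (f t : ℂ))) := by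
      refine tendsto_integral_filter_of_dominated_convergence (fun t ↦ ‖𝓕 φ (t - y)‖ * M)
        ?_ ?_ ?_ ?_
      · refine .of_forall fun ε ↦ ?_
        refine (hφi.comp_sub_right y).aestronglyMeasurable.mul ?_
        fun_prop
      · filter_upwards [self_mem_nhdsWithin] with ε hε
        refine .of_forall fun t ↦ ?_
        rw [norm_mul, norm_mul]
        gcongr
        rcases le_or_gt t 0 with ht | ht
        · have := (abs_nonneg _).trans (hM t)
          simpa [hf0 t ht] using this
        · calc _ ≤ M * 1 := by
                gcongr
                · exact (abs_nonneg _).trans (hM t)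
                · simpa using hM t
                · rw [Complex.norm_exp]
                  simp
                  have : 0 < ε := hε
                  positivity
            _ = M := mul_one _
      · exact (hφi.comp_sub_right y).norm.mul_const M
      · refine .of_forall fun t ↦ ?_
        have : Continuous fun ε : ℝ ↦ 𝓕 φ (t - y) * ((f t : ℂ) * Complex.exp (-ε * t)) := by
          fun_prop
        simpa using (this.tendsto 0).mono_left nhdsWithin_le_nhds
    have hR : Tendsto (fun ε : ℝ ↦ ∫ ξ, ((𝐞 (y * ξ) : ℂ) * φ ξ) * G (ε + 2 * π * ξ * Complex.I))
        (𝓝[>] 0) (𝓝 (∫ ξ, ((𝐞 (y * ξ) : ℂ) * φ ξ) * G (2 * π * ξ * Complex.I))) := by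
      have hcont : ContinuousOn (fun p : ℝ × ℝ ↦ G (p.1 + 2 * π * p.2 * Complex.I))
          (Set.Icc 0 1 ×ˢ tsupport φ) :=
        hG.comp (by fun_prop) fun p hp ↦ by simpa using hp.1.1
      obtain ⟨C, hC⟩ := (isCompact_Icc.prod hφc).exists_bound_of_continuousOn hcont
      have hpt (ξ : ℝ) : ContinuousOn (fun ε : ℝ ↦ G (ε + 2 * π * ξ * Complex.I)) (Set.Ici 0) :=
        hG.comp (by fun_prop) fun ε hε ↦ by simpa using hε
      refine tendsto_integral_filter_of_dominated_convergence (fun ξ ↦ ‖φ ξ‖ * C) ?_ ?_ ?_ ?_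
      · filter_upwards [self_mem_nhdsWithin] with ε hε
        refine Continuous.aestronglyMeasurable ?_
        have : Continuous fun ξ : ℝ ↦ G (ε + 2 * π * ξ * Complex.I) :=
          hG.comp_continuous (by fun_prop) fun ξ ↦ by simpa using (le_of_lt hε : (0 : ℝ) ≤ ε)
        exact (by fun_prop : Continuous fun ξ : ℝ ↦ (𝐞 (y * ξ) : ℂ) * φ ξ).mul this
      · filter_upwards [Ioo_mem_nhdsGT (zero_lt_one' ℝ)] with ε hε
        refine .of_forall fun ξ ↦ ?_
        by_cases h : ξ ∈ tsupport φ
        · simp only [norm_mul, Circle.norm_coe, one_mul]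
          gcongr
          exact hC (ε, ξ) ⟨⟨hε.1.le, hε.2.le⟩, h⟩
        · simp [image_eq_zero_of_notMem_tsupport h]
      · exact hφint.norm.mul_const C
      · refine .of_forall fun ξ ↦ ?_
        have := ((hpt ξ) 0 Set.self_mem_Ici).mono Set.Ioi_subset_Ici_self
        simpa using (this.tendsto.const_mul ((𝐞 (y * ξ) : ℂ) * φ ξ))
    have := tendsto_nhds_unique (hL.congr' ?_) hR
    · rw [this, fourier_real_eq]
      congr 1 with ξ
      rw [Circle.smul_def, smul_eq_mul, mul_assoc]
      ring_nf
    · filter_upwards [self_mem_nhdsWithin] with ε hε using hparseval y ε hε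
  simp_rw [hlim]
  exact (Real.zero_at_infty_fourier _).comp
    (tendsto_neg_atTop_atBot.mono_right atBot_le_cocompact)

/-- The Fejér kernel on the real line. -/
noncomputable def fejerKernel (u : ℝ) : ℝ := (1 - cos (2 * π * u)) / (2 * (π * u) ^ 2)

theorem fejerKernel_nonneg (u : ℝ) : 0 ≤ fejerKernel u :=
  div_nonneg (by linarith [cos_le_one (2 * π * u)]) (by positivity)

theorem fejerKernel_le (u : ℝ) : fejerKernel u ≤ 2 * (1 + u ^ 2)⁻¹ := by
  rcases eq_or_ne u 0 with rfl | hu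
  · simp [fejerKernel]
  have hu2 : 0 < u ^ 2 := by positivity
  have h1 := Real.one_sub_sq_div_two_le_cos (x := 2 * π * u)
  have h2 := Real.neg_one_le_cos (2 * π * u)
  have hπ : 1 ≤ π ^ 2 := by nlinarith [Real.pi_gt_three]
  rw [fejerKernel, ← div_eq_mul_inv, div_le_div_iff₀ (by positivity) (by positivity)]
  nlinarith [mul_le_mul_of_nonneg_right hπ hu2.le]

open MeasureTheory in
theorem integrable_fejerKernel : Integrable fejerKernel := by
  refine (integrable_inv_one_add_sq.const_mul 2).mono' ?_ (.of_forall fun u ↦ ?_)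
  · exact Measurable.aestronglyMeasurable (by unfold fejerKernel; fun_prop)
  · rw [norm_of_nonneg (fejerKernel_nonneg u)]
    exact fejerKernel_le u

open MeasureTheory in
theorem integral_fejerKernel_pos : 0 < ∫ u, fejerKernel u := by
  rw [integral_pos_iff_support_of_nonneg fejerKernel_nonneg integrable_fejerKernel]
  refine lt_of_lt_of_le (b := volume (Set.Ioo (0 : ℝ) 1)) (by simp) (measure_mono fun u hu ↦ ?_)
  have hcos : cos (2 * π * u) ≠ 1 := by
    rw [Ne, Real.cos_eq_one_iff_of_lt_of_lt (by nlinarith [pi_pos, hu.1])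
      (by nlinarith [pi_pos, hu.2])]
    have := hu.1
    positivity
  have hu0 := hu.1.ne'
  rw [Function.mem_support, fejerKernel]
  exact div_ne_zero (sub_ne_zero.mpr hcos.symm) (by positivity)

theorem integral_exp_mul_one_sub_div {c : ℂ} (hc : c ≠ 0) {R : ℝ} (hR : R ≠ 0) :
    ∫ ξ in (0 : ℝ)..R, Complex.exp (c * ξ) * (1 - ξ / R) =
      Complex.exp (c * R) / (R * c ^ 2) - 1 / c - 1 / (R * c ^ 2) := by
  have hR' : (R : ℂ) ≠ 0 := mod_cast hR
  have hderiv (x : ℝ) : HasDerivAt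
      (fun ξ : ℝ ↦ Complex.exp (c * ξ) * (1 - ξ / R) / c + Complex.exp (c * ξ) / (R * c ^ 2))
      (Complex.exp (c * x) * (1 - x / R)) x := by
    have hx : HasDerivAt (fun ξ : ℝ ↦ (ξ : ℂ)) 1 x := Complex.ofRealCLM.hasDerivAt
    have he := (hx.const_mul c).cexp
    refine (((he.mul ((hx.div_const (R : ℂ)).const_sub 1)).div_const c).add
      (he.div_const ((R : ℂ) * c ^ 2))).congr_deriv ?_
    field_simp
    ring
  rw [intervalIntegral.integral_eq_sub_of_hasDerivAt (fun x _ ↦ hderiv x)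
    (Continuous.intervalIntegrable (by fun_prop) _ _)]
  simp
  field_simp
  ring

open MeasureTheory FourierTransform in
theorem fourier_triangle {R : ℝ} (hR : 0 < R) {u : ℝ} (hu : u ≠ 0) :
    𝓕 (fun ξ : ℝ ↦ ((max 0 (1 - |ξ| / R) : ℝ) : ℂ)) u = (R * fejerKernel (R * u) : ℝ) := by
  set φ : ℝ → ℂ := fun ξ : ℝ ↦ ((max 0 (1 - |ξ| / R) : ℝ) : ℂ) with hφ
  have hφc : Continuous φ := by fun_prop
  have hzero (ξ : ℝ) (h : R ≤ |ξ|) : φ ξ = 0 := by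
    have : 1 ≤ |ξ| / R := (one_le_div hR).mpr h
    simp [hφ, this]
  have half (c : ℂ) (hc : c ≠ 0) : ∫ ξ in Set.Ioi (0 : ℝ), Complex.exp (c * ξ) * φ ξ =
      Complex.exp (c * R) / (R * c ^ 2) - 1 / c - 1 / (R * c ^ 2) := by
    rw [← integral_exp_mul_one_sub_div hc hR.ne', intervalIntegral.integral_of_le hR.le,
      setIntegral_eq_of_subset_of_forall_sdiff_eq_zero measurableSet_Ioi
        (Set.Ioc_subset_Ioi_self : Set.Ioc 0 R ⊆ Set.Ioi 0) ?_]
    · refine setIntegral_congr_fun measurableSet_Ioc fun ξ hξ ↦ ?_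
      have : ξ / R ≤ 1 := (div_le_one hR).mpr hξ.2
      simp [hφ, abs_of_pos hξ.1, this]
    · intro ξ hξ
      rw [hzero ξ ?_, mul_zero]
      have h0 : 0 < ξ := hξ.1
      rw [abs_of_pos h0]
      by_contra! h
      exact hξ.2 ⟨h0, h.le⟩
  set c : ℂ := -2 * π * u * Complex.I with hcdef
  have hc : c ≠ 0 := by simp [hcdef, hu, pi_ne_zero]
  have hInt : Integrable fun ξ : ℝ ↦ Complex.exp (c * ξ) * φ ξ := by
    refine Continuous.integrable_of_hasCompactSupport (by fun_prop) ?_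
    refine HasCompactSupport.mul_left
      (HasCompactSupport.intro (isCompact_Icc (a := -R) (b := R)) ?_)
    intro ξ hξ
    refine hzero ξ ?_
    by_contra! h
    exact hξ (abs_le.mp h.le)
  have hneg : ∫ ξ in Set.Iic (0 : ℝ), Complex.exp (c * ξ) * φ ξ =
      ∫ ξ in Set.Ioi (0 : ℝ), Complex.exp (-c * ξ) * φ ξ := by
    rw [← neg_zero, ← integral_comp_neg_Ioi, neg_zero]
    simp [hφ]
  have hsum : 𝓕 φ u = ∫ ξ : ℝ, Complex.exp (c * ξ) * φ ξ := by
    rw [fourier_real_eq_integral_exp_smul]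
    congr 1 with ξ
    rw [smul_eq_mul, hcdef]
    push_cast
    ring_nf
  have hcos : Complex.exp (c * R) + Complex.exp (-c * R) = 2 * Complex.cos (2 * π * (R * u)) := by
    rw [Complex.two_cos, hcdef, add_comm]
    ring_nf
  have hc2 : c ^ 2 = -(2 * π * u) ^ 2 := by
    rw [hcdef]
    linear_combination (2 * π * u : ℂ) ^ 2 * Complex.I_sq
  have hRC : (R : ℂ) ≠ 0 := mod_cast hR.ne'
  have huC : (u : ℂ) ≠ 0 := mod_cast hu
  have hπC : (π : ℂ) ≠ 0 := mod_cast pi_ne_zero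
  rw [hsum, ← intervalIntegral.integral_Iic_add_Ioi hInt.integrableOn hInt.integrableOn (b := 0),
    hneg, half c hc, half (-c) (neg_ne_zero.mpr hc), fejerKernel]
  push_cast
  calc _ = (Complex.exp (c * R) + Complex.exp (-c * R) - 2) / (R * c ^ 2) := by
        field_simp
        ring
    _ = _ := by
        rw [hcos, hc2]
        field_simp
        ring

open MeasureTheory in
theorem tendsto_integral_fejerKernel_tail {δ : ℝ} (hδ : 0 < δ) :
    Tendsto (fun R : ℝ ↦ ∫ v in {v : ℝ | δ < |v|}, R * fejerKernel (R * v)) atTop (nhds 0) := by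
  have hmeas (a : ℝ) : MeasurableSet {v : ℝ | a < |v|} :=
    measurableSet_lt (by fun_prop) (by fun_prop)
  have h : Tendsto (fun R : ℝ ↦ ∫ w, {w : ℝ | R * δ < |w|}.indicator fejerKernel w) atTop
      (nhds (∫ _ : ℝ, (0 : ℝ))) := by
    refine tendsto_integral_filter_of_dominated_convergence fejerKernel ?_ ?_
      integrable_fejerKernel ?_
    · exact .of_forall fun R ↦ integrable_fejerKernel.aestronglyMeasurable.indicator (hmeas _)
    · refine .of_forall fun R ↦ .of_forall fun w ↦ ?_
      refine (norm_indicator_le_norm_self _ _).trans ?_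
      rw [norm_of_nonneg (fejerKernel_nonneg w)]
    · refine .of_forall fun w ↦ tendsto_const_nhds.congr' ?_
      filter_upwards [eventually_gt_atTop (|w| / δ)] with R hR
      rw [div_lt_iff₀ hδ] at hR
      exact (Set.indicator_of_notMem (by simpa using hR.le) _).symm
  rw [integral_zero] at h
  refine h.congr' ?_
  filter_upwards [eventually_gt_atTop 0] with R hR
  rw [← integral_indicator (hmeas _)]
  have := Measure.integral_comp_mul_left ({w : ℝ | R * δ < |w|}.indicator fejerKernel) R
  rw [smul_eq_mul, abs_of_pos (inv_pos.mpr hR), eq_inv_mul_iff_mul_eq₀ hR.ne',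
    ← integral_const_mul] at this
  rw [← this]
  congr 1 with v
  simp [Set.indicator_apply, abs_mul, abs_of_pos hR, hR]

open MeasureTheory in
/-- A bounded function whose averages against all Fejér kernels vanish at infinity cannot stay above
a positive constant on long intervals far out. -/
theorem eventually_exists_lt_of_tendsto_fejer {f : ℝ → ℝ} {M : ℝ} (hf : Measurable f)
    (hM : ∀ t, |f t| ≤ M)
    (hconv : ∀ R > 0, Tendsto (fun y ↦ ∫ t, R * fejerKernel (R * (t - y)) * f t) atTop (nhds 0))
    {η δ : ℝ} (hη : 0 < η) (hδ : 0 < δ) :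
    ∀ᶠ y in atTop, ∃ t, |t - y| ≤ δ ∧ f t < η := by
  have hM0 : 0 ≤ M := (abs_nonneg _).trans (hM 0)
  have hc := integral_fejerKernel_pos
  set c := ∫ u, fejerKernel u with hcdef
  have hmeas : MeasurableSet {v : ℝ | δ < |v|} := measurableSet_lt (by fun_prop) (by fun_prop)
  obtain ⟨R, htail, hR⟩ : ∃ R : ℝ,
      (∫ v in {v : ℝ | δ < |v|}, R * fejerKernel (R * v)) * (η + M) < η * c / 2 ∧ 0 < R := by
    have h := (tendsto_integral_fejerKernel_tail hδ).mul_const (η + M)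
    rw [zero_mul] at h
    exact ((h.eventually_lt_const (by positivity)).and (eventually_gt_atTop 0)).exists
  set k : ℝ → ℝ := fun v ↦ R * fejerKernel (R * v) with hk
  have hkint : Integrable k := (integrable_fejerKernel.comp_mul_left' hR.ne').const_mul R
  have hkc : ∫ v, k v = c := by
    rw [hk, integral_const_mul, Measure.integral_comp_mul_left, smul_eq_mul,
      abs_of_pos (inv_pos.mpr hR), mul_inv_cancel_left₀ hR.ne']
  have hk0 (v : ℝ) : 0 ≤ k v := mul_nonneg hR.le (fejerKernel_nonneg _)
  filter_upwards [(hconv R hR).eventually_lt_const (by positivity : 0 < η * c / 2)] with y hy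
  by_contra! hlow
  refine hy.not_ge ?_
  have hlower (v : ℝ) :
      η * k v - {v : ℝ | δ < |v|}.indicator k v * (η + M) ≤ k v * f (v + y) := by
    by_cases hv : δ < |v|
    · rw [Set.indicator_of_mem (by exact hv)]
      nlinarith [hk0 v, (abs_le.mp (hM (v + y))).1]
    · rw [Set.indicator_of_notMem (by exact hv)]
      nlinarith [hk0 v, hlow (v + y) (by simpa using hv)]
  have hfint : Integrable fun v ↦ k v * f (v + y) := by
    refine hkint.mul_bdd (c := M) ?_ (.of_forall fun v ↦ hM _)
    exact (hf.comp (measurable_add_const y)).aestronglyMeasurable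
  have hle := integral_mono ((hkint.const_mul η).sub ((hkint.indicator hmeas).mul_const (η + M)))
    hfint hlower
  rw [integral_sub' (hkint.const_mul η) ((hkint.indicator hmeas).mul_const _), integral_const_mul,
    integral_mul_const, integral_indicator hmeas, hkc] at hle
  have hshift : ∫ v, k v * f (v + y) = ∫ t, R * fejerKernel (R * (t - y)) * f t := by
    rw [← integral_sub_right_eq_self _ y]
    simp [hk]
  rw [hshift] at hle
  linarith

open MeasureTheory FourierTransform in
/-- A Tauberian theorem: if `t ↦ exp t * (f t + 1)` is nonnegative and nondecreasing, `f` is bounded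
and its Laplace transform extends continuously to the closed right half-plane, then `f` tends to
zero. -/
theorem tendsto_zero_of_laplace_continuousOn {f : ℝ → ℝ} {M : ℝ} {G : ℂ → ℂ}
    (hf : Measurable f) (hM : ∀ t, |f t| ≤ M) (hf0 : ∀ t ≤ 0, f t = 0)
    (hnonneg : ∀ t, 0 ≤ f t + 1)
    (hmono : ∀ s t, 0 < s → s ≤ t → exp s * (f s + 1) ≤ exp t * (f t + 1))
    (hG : ContinuousOn G {z | 0 ≤ z.re})
    (hfG : ∀ z : ℂ, 0 < z.re → ∫ t in Set.Ioi (0 : ℝ), (f t : ℂ) * Complex.exp (-z * t) = G z) :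
    Tendsto f atTop (nhds 0) := by
  have hconv (R : ℝ) (hR : 0 < R) :
      Tendsto (fun y ↦ ∫ t, R * fejerKernel (R * (t - y)) * f t) atTop (nhds 0) := by
    set φ : ℝ → ℂ := fun ξ : ℝ ↦ ((max 0 (1 - |ξ| / R) : ℝ) : ℂ) with hφ
    have hφc : Continuous φ := by fun_prop
    have hsupp : HasCompactSupport φ := by
      refine HasCompactSupport.intro (isCompact_Icc (a := -R) (b := R)) fun ξ hξ ↦ ?_
      have : 1 ≤ |ξ| / R := by
        rw [one_le_div hR]
        by_contra! h
        exact hξ (abs_le.mp h.le)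
      simp [hφ, this]
    have hae (y : ℝ) : ∀ᵐ t : ℝ, 𝓕 φ (t - y) = (R * fejerKernel (R * (t - y)) : ℝ) := by
      filter_upwards [Measure.ae_ne volume y] with t ht
      exact fourier_triangle hR (sub_ne_zero.mpr ht)
    have hInt : Integrable (𝓕 φ) := by
      refine ((integrable_fejerKernel.comp_mul_left' hR.ne').const_mul R).ofReal.congr ?_
      filter_upwards [hae 0] with t ht
      simpa using ht.symm
    have h := tendsto_integral_mul_fourier_of_laplace_continuousOn hf hM hf0 hG hfG hφc hsupp hInt
    have h' := (Complex.continuous_re.tendsto _).comp h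
    rw [Complex.zero_re] at h'
    refine h'.congr fun y ↦ ?_
    have : ∫ t, 𝓕 φ (t - y) * (f t : ℂ) =
        ((∫ t, R * fejerKernel (R * (t - y)) * f t : ℝ) : ℂ) := by
      rw [← integral_complex_ofReal]
      refine integral_congr_ae ?_
      filter_upwards [hae y] with t ht
      rw [ht]
      push_cast
      rfl
    simp only [Function.comp_apply, this, Complex.ofReal_re]
  have hconv' (R : ℝ) (hR : 0 < R) :
      Tendsto (fun y ↦ ∫ t, R * fejerKernel (R * (t - y)) * (-f t)) atTop (nhds 0) := by
    simpa [integral_neg] using (hconv R hR).neg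
  rw [tendsto_order]
  refine ⟨fun a ha ↦ ?_, fun a ha ↦ ?_⟩
  · obtain ⟨δ, hδ, hδa⟩ : ∃ δ > 0, exp (2 * δ) * (1 + a) < 1 + a / 2 := by
      have : Continuous fun δ ↦ exp (2 * δ) * (1 + a) := by fun_prop
      have h := (this.tendsto 0).mono_left (nhdsWithin_le_nhds (s := Set.Ioi 0))
      obtain ⟨δ, h1, h2⟩ := ((h.eventually_lt_const (u := 1 + a / 2) (by simp; linarith)).and
        self_mem_nhdsWithin).exists
      exact ⟨δ, h2, h1⟩
    have h := eventually_exists_lt_of_tendsto_fejer hf.neg (by simpa using hM) hconv'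
      (η := -a / 2) (by linarith) hδ
    have hshift : Tendsto (fun y : ℝ ↦ y - δ) atTop atTop :=
      tendsto_atTop_add_const_right _ _ tendsto_id
    filter_upwards [hshift.eventually h, eventually_gt_atTop (2 * δ)] with y ⟨t, ht, hft⟩ hy
    rw [abs_le] at ht
    by_contra! hcon
    have h1 := hmono t y (by linarith) (by linarith)
    have h2 : f t + 1 ≤ exp (y - t) * (f y + 1) := by
      rw [exp_sub, div_mul_eq_mul_div, le_div_iff₀ (exp_pos _)]
      linarith
    have h3 : exp (y - t) * (f y + 1) ≤ exp (y - t) * (1 + a) :=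
      mul_le_mul_of_nonneg_left (by linarith) (exp_pos _).le
    have h4 : -f t < -a / 2 := hft
    have h5 : 0 ≤ 1 + a := by linarith [hnonneg y]
    have h6 : exp (y - t) * (1 + a) ≤ exp (2 * δ) * (1 + a) := by gcongr; linarith
    linarith
  · obtain ⟨δ, hδ, hδa⟩ : ∃ δ > 0, exp (2 * δ) * (1 + a / 2) < 1 + a := by
      have : Continuous fun δ ↦ exp (2 * δ) * (1 + a / 2) := by fun_prop
      have h := (this.tendsto 0).mono_left (nhdsWithin_le_nhds (s := Set.Ioi 0))
      obtain ⟨δ, h1, h2⟩ := ((h.eventually_lt_const (u := 1 + a) (by simp; linarith)).and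
        self_mem_nhdsWithin).exists
      exact ⟨δ, h2, h1⟩
    have h := eventually_exists_lt_of_tendsto_fejer hf hM hconv (η := a / 2) (by linarith) hδ
    have hshift : Tendsto (fun y : ℝ ↦ y + δ) atTop atTop :=
      tendsto_atTop_add_const_right _ _ tendsto_id
    filter_upwards [hshift.eventually h, eventually_gt_atTop 0] with y ⟨t, ht, hft⟩ hy
    rw [abs_le] at ht
    have h1 := hmono y t (by linarith) (by linarith)
    have h2 : f y + 1 ≤ exp (t - y) * (f t + 1) := by
      rw [exp_sub, div_mul_eq_mul_div, le_div_iff₀ (exp_pos _)]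
      linarith
    have h3 : exp (t - y) * (f t + 1) ≤ exp (t - y) * (1 + a / 2) :=
      mul_le_mul_of_nonneg_left (by linarith) (exp_pos _).le
    have h4 : exp (t - y) * (1 + a / 2) ≤ exp (2 * δ) * (1 + a / 2) := by gcongr; linarith
    linarith

open ArithmeticFunction in
theorem exists_continuousOn_LSeries_vonMangoldt_sub :
    ∃ A : ℂ → ℂ, ContinuousOn A {s | 1 ≤ s.re} ∧
      ∀ s : ℂ, 1 < s.re → LSeries (fun n ↦ (vonMangoldt n : ℂ)) s = A s + 1 / (s - 1) := by
  refine ⟨_, vonMangoldt.continuousOn_LFunctionResidueClassAux (1 : ZMod 1), fun s hs ↦ ?_⟩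
  have h := vonMangoldt.eqOn_LFunctionResidueClassAux (isUnit_one : IsUnit (1 : ZMod 1)) hs
  have hΛ : vonMangoldt.residueClass (1 : ZMod 1) = fun n ↦ vonMangoldt n := by
    ext n
    simp [Subsingleton.elim _ (1 : ZMod 1)]
  rw [h, hΛ]
  simp

open MeasureTheory ArithmeticFunction in
theorem LSeries_vonMangoldt_eq_laplace {s : ℂ} (hs : 1 < s.re) :
    LSeries (fun n ↦ (vonMangoldt n : ℂ)) s =
      s * ∫ t in Set.Ioi (0 : ℝ), (Chebyshev.psi (exp t) : ℂ) * Complex.exp (-s * t) := by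
  have hO : (fun n : ℕ ↦ ∑ k ∈ Icc 1 n, vonMangoldt k) =O[atTop] fun n ↦ (n : ℝ) ^ (1 : ℝ) := by
    refine Asymptotics.IsBigO.of_bound (Real.log 4 + 4) (.of_forall fun n ↦ ?_)
    have h := Chebyshev.psi_le_const_mul_self (Nat.cast_nonneg n)
    have h0 := Chebyshev.psi_nonneg n
    simp only [Chebyshev.psi, Nat.floor_natCast, ← Icc_add_one_left_eq_Ioc, zero_add] at h h0
    simpa [abs_of_nonneg h0] using h
  rw [LSeries_eq_mul_integral_of_nonneg _ zero_le_one hs hO fun _ ↦ vonMangoldt_nonneg,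
    ← exp_zero, ← integral_comp_exp_Ioi]
  congr 1
  refine setIntegral_congr_fun measurableSet_Ioi fun t _ ↦ ?_
  have hcpow : ((exp t : ℝ) : ℂ) ^ (-(s + 1)) = Complex.exp (-(s + 1) * t) := by
    rw [Complex.cpow_def_of_ne_zero (by simp), Complex.ofReal_exp, ← Complex.ofReal_exp,
      ← Complex.ofReal_log (exp_pos t).le, log_exp, mul_comm]
  simp only [hcpow, Chebyshev.psi, ← Icc_add_one_left_eq_Ioc, zero_add, Complex.real_smul]
  rw [Complex.ofReal_exp, mul_left_comm, ← Complex.exp_add]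
  push_cast
  ring_nf

open MeasureTheory in
/-- The **prime number theorem** for the Chebyshev function `ψ`. -/
theorem tendsto_psi_div_self : Tendsto (fun x ↦ Chebyshev.psi x / x) atTop (nhds 1) := by
  obtain ⟨A, hA, hLA⟩ := exists_continuousOn_LSeries_vonMangoldt_sub
  set f : ℝ → ℝ := fun t ↦ if t ≤ 0 then 0 else Chebyshev.psi (exp t) * exp (-t) - 1 with hf
  have hpsi (t : ℝ) : Chebyshev.psi (exp t) * exp (-t) ≤ log 4 + 4 := by
    rw [exp_neg, ← div_eq_mul_inv, div_le_iff₀ (exp_pos t)]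
    exact Chebyshev.psi_le_const_mul_self (exp_pos t).le
  have hpsi0 (t : ℝ) : 0 ≤ Chebyshev.psi (exp t) * exp (-t) :=
    mul_nonneg (Chebyshev.psi_nonneg _) (exp_pos _).le
  have hpsim : Measurable fun t ↦ Chebyshev.psi (exp t) * exp (-t) :=
    (Chebyshev.psi_mono.measurable.comp measurable_exp).mul (by fun_prop)
  have hlog : 0 ≤ log 4 := log_nonneg (by norm_num)
  have hlim : Tendsto f atTop (nhds 0) := by
    refine tendsto_zero_of_laplace_continuousOn (M := log 4 + 4)
      (G := fun z ↦ (A (1 + z) - 1) / (1 + z)) ?_ ?_ ?_ ?_ ?_ ?_ ?_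
    · exact Measurable.ite measurableSet_Iic measurable_const (hpsim.sub_const 1)
    · intro t
      by_cases ht : t ≤ 0
      · simp only [hf, ht, if_true, abs_zero]
        positivity
      · simp only [hf, ht, if_false]
        rw [abs_le]
        constructor <;> linarith [hpsi t, hpsi0 t]
    · intro t ht
      simp [hf, ht]
    · intro t
      by_cases ht : t ≤ 0
      · simp [hf, ht]
      · simpa [hf, ht] using hpsi0 t
    · intro s t hs hst
      have ht : ¬ t ≤ 0 := by linarith
      simp only [hf, not_le.mpr hs, ht, if_false, sub_add_cancel]
      rw [mul_left_comm, ← exp_add, mul_left_comm, ← exp_add]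
      simpa using Chebyshev.psi_mono (exp_le_exp.mpr hst)
    · refine ContinuousOn.div ((hA.comp (by fun_prop) fun z hz ↦ ?_).sub continuousOn_const)
        (by fun_prop) fun z hz h ↦ ?_
      · simpa using hz
      · have h1 := congrArg Complex.re h
        have h2 : 0 ≤ z.re := hz
        simp at h1
        linarith
    · intro z hz
      have hz0 : z ≠ 0 := fun h ↦ by simp [h] at hz
      have hz1 : 1 + z ≠ 0 := fun h ↦ by
        have := congrArg Complex.re h
        simp at this
        linarith
      have hs : 1 < (1 + z).re := by simpa using hz
      have hexp : IntegrableOn (fun t : ℝ ↦ Complex.exp (-z * t)) (Set.Ioi 0) :=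
        integrableOn_exp_mul_complex_Ioi (by simpa using hz) 0
      have hexp' : IntegrableOn (fun t : ℝ ↦
          ((Chebyshev.psi (exp t) * exp (-t) : ℝ) : ℂ) * Complex.exp (-z * t)) (Set.Ioi 0) := by
        refine hexp.bdd_mul (c := log 4 + 4)
          (Complex.measurable_ofReal.comp hpsim).aestronglyMeasurable (.of_forall fun t ↦ ?_)
        rw [Complex.norm_real, norm_of_nonneg (hpsi0 t)]
        exact hpsi t
      have hI : ∫ t in Set.Ioi (0 : ℝ), Complex.exp (-z * t) = 1 / z := by
        rw [integral_exp_mul_complex_Ioi (by simpa using hz)]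
        simp
      have hL := LSeries_vonMangoldt_eq_laplace hs
      rw [hLA _ hs, add_sub_cancel_left] at hL
      have hJ : ∫ t in Set.Ioi (0 : ℝ),
          ((Chebyshev.psi (exp t) * exp (-t) : ℝ) : ℂ) * Complex.exp (-z * t) =
          (A (1 + z) + 1 / z) / (1 + z) := by
        rw [hL, mul_div_cancel_left₀ _ hz1]
        refine setIntegral_congr_fun measurableSet_Ioi fun t _ ↦ ?_
        simp only [Complex.ofReal_mul, Complex.ofReal_exp, Complex.ofReal_neg]
        rw [mul_assoc, ← Complex.exp_add]
        ring_nf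
      calc _ = ∫ t in Set.Ioi (0 : ℝ),
            (((Chebyshev.psi (exp t) * exp (-t) : ℝ) : ℂ) * Complex.exp (-z * t) -
              Complex.exp (-z * t)) := by
            refine setIntegral_congr_fun measurableSet_Ioi fun t ht ↦ ?_
            have ht' : ¬ t ≤ 0 := not_le.mpr ht
            simp only [hf, ht', if_false]
            push_cast
            ring
        _ = (A (1 + z) + 1 / z) / (1 + z) - 1 / z := by rw [integral_sub hexp' hexp, hJ, hI]
        _ = _ := by
            field_simp
            ring
  have h := (hlim.comp tendsto_log_atTop).add_const 1
  rw [zero_add] at h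
  refine h.congr' ?_
  filter_upwards [eventually_gt_atTop 1] with x hx
  have hx0 : 0 < x := by linarith
  simp [hf, not_le.mpr (log_pos hx), exp_log hx0, exp_neg, div_eq_mul_inv]

theorem tendsto_theta_div_self : Tendsto (fun x ↦ Chebyshev.theta x / x) atTop (nhds 1) := by
  have h : (Chebyshev.psi - Chebyshev.theta) =o[atTop] fun x : ℝ ↦ x := by
    refine Chebyshev.isBigO_psi_sub_theta_sqrt.trans_isLittleO ?_
    refine Asymptotics.isLittleO_of_tendsto (by simp +contextual) ?_
    simp_rw [sqrt_div_self]
    exact (tendsto_sqrt_atTop.inv_tendsto_atTop).congr fun x ↦ by simp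
  have h' := tendsto_psi_div_self.sub h.tendsto_div_nhds_zero
  rw [sub_zero] at h'
  refine h'.congr fun x ↦ ?_
  simp only [Pi.sub_apply]
  ring

/-- The **prime number theorem**. -/
theorem tendsto_primeCounting_mul_log_div :
    Tendsto (fun x : ℝ ↦ (Nat.primeCounting ⌊x⌋₊ : ℝ) * log x / x) atTop (nhds 1) := by
  have h : (fun x : ℝ ↦ (Nat.primeCounting ⌊x⌋₊ : ℝ) - Chebyshev.theta x / log x) =o[atTop]
      fun x ↦ x / log x := by
    refine Chebyshev.primeCounting_sub_theta_div_log_isBigO.trans_isLittleO ?_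
    refine Asymptotics.isLittleO_of_tendsto' ?_ ?_
    · filter_upwards [eventually_gt_atTop 1] with x hx hx'
      have := log_pos hx
      have : x / log x ≠ 0 := by positivity
      contradiction
    · refine tendsto_log_atTop.inv_tendsto_atTop.congr' ?_
      filter_upwards [eventually_gt_atTop 1] with x hx
      have := log_pos hx
      simp only [Pi.inv_apply]
      field_simp
  have h' := h.tendsto_div_nhds_zero.add tendsto_theta_div_self
  rw [zero_add] at h'
  refine h'.congr' ?_
  filter_upwards [eventually_gt_atTop 1] with x hx
  have := log_pos hx
  field_simp
  ring

theorem primeCounting_mul_log_le {y : ℝ} (hy : 1 ≤ y) :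
    (Nat.primeCounting ⌊y⌋₊ : ℝ) * log y ≤ (2 * log 4 + 2) * y := by
  rcases hy.eq_or_lt with rfl | hy
  · simpa using by positivity
  have hlog := log_pos hy
  have hsq : √y * √y = y := mul_self_sqrt (by linarith)
  have hls : log √y = log y / 2 := log_sqrt (by linarith)
  have hl : log y / 2 ≤ √y := hls ▸ log_le_self (sqrt_nonneg y)
  have h := mul_le_mul_of_nonneg_right (Chebyshev.pi_le_log4_mul_div hy) hlog.le
  rw [hls, add_mul, div_mul_eq_mul_div, show log 4 * y * log y / (log y / 2) = 2 * log 4 * y by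
    field_simp] at h
  nlinarith [sqrt_nonneg y]

theorem primeCounting_floor_le {y : ℝ} (hy : 0 ≤ y) : (Nat.primeCounting ⌊y⌋₊ : ℝ) ≤ y := by
  refine le_trans ?_ (Nat.floor_le hy)
  rw [← Nat.primesLE_card_eq_primeCounting]
  have : Nat.primesLE ⌊y⌋₊ ⊆ Ioc 0 ⌊y⌋₊ := fun p hp ↦ by
    rw [Nat.mem_primesLE] at hp
    exact mem_Ioc.mpr ⟨hp.2.pos, hp.1⟩
  exact_mod_cast (card_le_card this).trans_eq (by simp)

theorem integral_inv_sub_inv_two_sub {a : ℝ} (ha : 0 < a) (ha1 : a ≤ 1) :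
    ∫ u in a..1, (u⁻¹ - (2 - u)⁻¹) = -log (1 - (1 - a) ^ 2) := by
  have hmem {u : ℝ} (hu : u ∈ Set.uIcc a 1) : u ≠ 0 ∧ 2 - u ≠ 0 := by
    rw [Set.uIcc_of_le ha1] at hu
    constructor <;> linarith [hu.1, hu.2]
  have hderiv (u : ℝ) (hu : u ∈ Set.uIcc a 1) :
      HasDerivAt (fun u ↦ log u + log (2 - u)) (u⁻¹ - (2 - u)⁻¹) u := by
    have h := (((hasDerivAt_id u).const_sub 2).log (hmem hu).2)
    refine ((hasDerivAt_log (hmem hu).1).add h).congr_deriv ?_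
    simp only [id]
    ring
  rw [intervalIntegral.integral_eq_sub_of_hasDerivAt hderiv]
  · rw [show 1 - (1 - a) ^ 2 = a * (2 - a) by ring, log_mul ha.ne' (by linarith)]
    norm_num
  · refine ContinuousOn.intervalIntegrable ?_
    exact (continuousOn_id.inv₀ fun u hu ↦ (hmem hu).1).sub
      ((continuousOn_const.sub continuousOn_id).inv₀ fun u hu ↦ (hmem hu).2)

theorem integral_mul_inv_sub_inv_two_sub :
    ∫ u in (0 : ℝ)..1, u * (u⁻¹ - (2 - u)⁻¹) = 2 - log 4 := by
  have hmem {u : ℝ} (hu : u ∈ Set.uIcc (0 : ℝ) 1) : 2 - u ≠ 0 := by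
    rw [Set.uIcc_of_le zero_le_one] at hu
    linarith [hu.2]
  have hderiv (u : ℝ) (hu : u ∈ Set.uIcc (0 : ℝ) 1) :
      HasDerivAt (fun u ↦ 2 * u + 2 * log (2 - u)) (2 - 2 * (2 - u)⁻¹) u := by
    have h := (((hasDerivAt_id u).const_sub 2).log (hmem hu)).const_mul 2
    refine (((hasDerivAt_id u).const_mul 2).add h).congr_deriv ?_
    simp only [id]
    ring
  have hcongr : ∫ u in (0 : ℝ)..1, u * (u⁻¹ - (2 - u)⁻¹) =
      ∫ u in (0 : ℝ)..1, (2 - 2 * (2 - u)⁻¹) := by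
    refine intervalIntegral.integral_congr_ae (.of_forall fun u hu ↦ ?_)
    rw [Set.uIoc_of_le zero_le_one] at hu
    have h0 := hu.1.ne'
    have h2 : 2 - u ≠ 0 := by linarith [hu.2]
    field_simp
    ring
  rw [hcongr, intervalIntegral.integral_eq_sub_of_hasDerivAt hderiv]
  · rw [show (4 : ℝ) = 2 ^ 2 by norm_num, log_pow]
    norm_num
  · refine ContinuousOn.intervalIntegrable ?_
    exact continuousOn_const.sub (continuousOn_const.mul
      ((continuousOn_const.sub continuousOn_id).inv₀ fun u hu ↦ hmem hu))

open MeasureTheory in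
/-- Partial summation for the sum over primes. -/
theorem sum_primes_neg_log_eq_integral {X : ℝ} (hX : 0 < X) :
    ∑ p ∈ (range (⌊X⌋₊ + 1)).filter Nat.Prime, (-log (1 - (1 - (p : ℝ) / X) ^ 2)) =
      ∫ u in Set.Ioc (0 : ℝ) 1, (Nat.primeCounting ⌊u * X⌋₊ : ℝ) * (u⁻¹ - (2 - u)⁻¹) := by
  set S := (range (⌊X⌋₊ + 1)).filter Nat.Prime with hS
  set g : ℝ → ℝ := fun u ↦ u⁻¹ - (2 - u)⁻¹ with hg
  have hpos {p : ℕ} (hp : p ∈ S) : 0 < (p : ℝ) / X ∧ (p : ℝ) / X ≤ 1 := by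
    rw [hS, mem_filter, mem_range, Nat.lt_succ_iff, Nat.le_floor_iff hX.le] at hp
    have : (0 : ℝ) < p := mod_cast hp.2.pos
    exact ⟨by positivity, (div_le_one hX).mpr hp.1⟩
  have hsub {a : ℝ} (ha : 0 < a) : Set.Icc a 1 ⊆ Set.Ioc 0 1 :=
    fun u hu ↦ ⟨ha.trans_le hu.1, hu.2⟩
  have hInt {p : ℕ} (hp : p ∈ S) :
      Integrable ((Set.Icc ((p : ℝ) / X) 1).indicator g) (volume.restrict (Set.Ioc 0 1)) := by
    refine Integrable.restrict ((integrable_indicator_iff measurableSet_Icc).mpr ?_)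
    refine ContinuousOn.integrableOn_Icc ?_
    refine (continuousOn_id.inv₀ fun u hu ↦ ?_).sub
      ((continuousOn_const.sub continuousOn_id).inv₀ fun u hu ↦ ?_)
    · exact ((hsub (hpos hp).1 hu).1).ne'
    · exact (show (0 : ℝ) < 2 - u by linarith [hu.2]).ne'
  have hterm {p : ℕ} (hp : p ∈ S) : -log (1 - (1 - (p : ℝ) / X) ^ 2) =
      ∫ u in Set.Ioc (0 : ℝ) 1, (Set.Icc ((p : ℝ) / X) 1).indicator g u := by
    rw [← integral_inv_sub_inv_two_sub (hpos hp).1 (hpos hp).2,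
      intervalIntegral.integral_of_le (hpos hp).2, setIntegral_indicator measurableSet_Icc,
      Set.inter_eq_self_of_subset_right (hsub (hpos hp).1), integral_Icc_eq_integral_Ioc]
  rw [sum_congr rfl fun p hp ↦ hterm hp, ← integral_finsetSum _ fun p hp ↦ hInt hp]
  refine setIntegral_congr_fun measurableSet_Ioc fun u hu ↦ ?_
  have hcard : S.filter (fun p : ℕ ↦ (p : ℝ) / X ≤ u) = Nat.primesLE ⌊u * X⌋₊ := by
    ext p
    have huX : u * X ≤ X := by nlinarith [hu.2]
    rw [mem_filter, hS, mem_filter, mem_range, Nat.lt_succ_iff, Nat.le_floor_iff hX.le,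
      Nat.mem_primesLE, Nat.le_floor_iff (mul_nonneg hu.1.le hX.le), div_le_iff₀ hX]
    exact ⟨fun h ↦ ⟨h.2, h.1.2⟩, fun h ↦ ⟨⟨h.1.trans huX, h.2⟩, h.1⟩⟩
  simp only [Set.indicator_apply, Set.mem_Icc, hu.2, and_true]
  rw [← sum_filter, hcard, sum_const, Nat.primesLE_card_eq_primeCounting, nsmul_eq_mul]

/-- As X → ∞, (log X / X) · Σ_{p ≤ X} (− log(1 − (1 − p/X)²)) → 2 − log 4. -/
theorem resonator_norm_asymptotics :
    Filter.Tendsto (fun X : ℝ =>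
        (Real.log X / X) * ∑ p ∈ (Finset.range (Nat.floor X + 1)).filter Nat.Prime,
          (-Real.log (1 - (1 - (p : ℝ) / X) ^ (2 : ℕ))))
      Filter.atTop (nhds (2 - Real.log 4)) := by
  have hlim : Tendsto (fun X : ℝ ↦ ∫ u in Set.Ioc (0 : ℝ) 1,
      log X / X * ((Nat.primeCounting ⌊u * X⌋₊ : ℝ) * (u⁻¹ - (2 - u)⁻¹))) atTop
      (nhds (∫ u in Set.Ioc (0 : ℝ) 1, u * (u⁻¹ - (2 - u)⁻¹))) := by
    refine MeasureTheory.tendsto_integral_filter_of_dominated_convergence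
      (fun u ↦ 2 * log 4 + 2 - log u) ?_ ?_ ?_ ?_
    · refine .of_forall fun X ↦ Measurable.aestronglyMeasurable ?_
      have h : Measurable fun u : ℝ ↦ (Nat.primeCounting ⌊u * X⌋₊ : ℝ) :=
        (measurable_from_top (f := fun n : ℕ ↦ (Nat.primeCounting n : ℝ))).comp
          (Nat.measurable_floor.comp (measurable_mul_const X))
      fun_prop
    · filter_upwards [eventually_ge_atTop 1] with X hX
      refine (MeasureTheory.ae_restrict_iff' measurableSet_Ioc).mpr (.of_forall fun u hu ↦ ?_)
      obtain ⟨hu0, hu1⟩ := hu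
      have hX0 : 0 < X := by linarith
      have hlogX := log_nonneg hX
      have hlogu := log_nonpos hu0.le hu1
      have hg0 : 0 ≤ u⁻¹ - (2 - u)⁻¹ := sub_nonneg.mpr (inv_anti₀ hu0 (by linarith))
      have hg1 : u⁻¹ - (2 - u)⁻¹ ≤ u⁻¹ := sub_le_self _ (inv_nonneg.mpr (by linarith))
      have hC : 0 ≤ 2 * log 4 + 2 - log u := by
        have : 0 ≤ log 4 := log_nonneg (by norm_num)
        linarith
      rw [norm_of_nonneg (by positivity)]
      rcases lt_or_ge (u * X) 1 with hy | hy
      · simpa [Nat.floor_eq_zero.mpr hy] using hC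
      have hpi := primeCounting_mul_log_le hy
      have hpi' := primeCounting_floor_le (zero_le_one.trans hy)
      rw [log_mul hu0.ne' hX0.ne'] at hpi
      have hmain : (Nat.primeCounting ⌊u * X⌋₊ : ℝ) * log X ≤
          (2 * log 4 + 2 - log u) * (u * X) := by
        nlinarith [mul_le_mul_of_nonneg_right hpi' (neg_nonneg.mpr hlogu)]
      calc _ = ((Nat.primeCounting ⌊u * X⌋₊ : ℝ) * log X) * (u⁻¹ - (2 - u)⁻¹) / X := by ring
        _ ≤ ((2 * log 4 + 2 - log u) * (u * X)) * u⁻¹ / X := by gcongr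
        _ = _ := by field_simp
    · have h : IntervalIntegrable (fun u ↦ 2 * log 4 + 2 - log u) MeasureTheory.volume 0 1 :=
        intervalIntegrable_const.sub intervalIntegral.intervalIntegrable_log'
      exact (intervalIntegrable_iff_integrableOn_Ioc_of_le zero_le_one).mp h
    · refine (MeasureTheory.ae_restrict_iff' measurableSet_Ioc).mpr (.of_forall fun u hu ↦ ?_)
      have hu0 := hu.1
      have hscale : Tendsto (fun X : ℝ ↦ u * X) atTop atTop := tendsto_id.const_mul_atTop hu0
      have h1 := tendsto_primeCounting_mul_log_div.comp hscale
      have h2 := ((tendsto_log_atTop.comp hscale).const_div_atTop (log u)).const_sub 1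
      have h3 := ((h1.mul h2).mul_const u).mul_const (u⁻¹ - (2 - u)⁻¹)
      rw [sub_zero, one_mul, one_mul] at h3
      refine h3.congr' ?_
      filter_upwards [eventually_gt_atTop 0, hscale.eventually_gt_atTop 1] with X hX hy
      have hlog := log_pos hy
      have hlog' : log X = log (u * X) - log u := by
        rw [log_mul hu0.ne' hX.ne']
        ring
      simp only [Function.comp_apply]
      rw [hlog']
      field_simp
  rw [← intervalIntegral.integral_of_le zero_le_one, integral_mul_inv_sub_inv_two_sub] at hlim
  refine hlim.congr' ?_
  filter_upwards [eventually_gt_atTop 0] with X hX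
  rw [sum_primes_neg_log_eq_integral hX, MeasureTheory.integral_const_mul]
end
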